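/- Let n ≥ 1, let 0 < δ < 2π, and let J be a smooth almost complex structure on ℝ^{2n} with J(0) = J_std. Then there exist ε > 0 and C > 0, depending only on J and δ, such that for every ρ > 0 and every smooth map u : [−ρ−1,ρ+1]×I → ℝ^{2n} with sup|u| < ε and ‖∂̄_J u‖^∧_{1,δ} < ε, there exists c ∈ ℝ^{2n} with |c| ≤ ε such that ‖(u−c)|_{[−ρ,ρ]×I}‖^∧_{3,δ} ≤ C·( ‖∂̄_J u‖^∧_{2,δ} + ‖(u−c)|_{[−ρ−1,−ρ]×I}‖₂ + ‖(u−c)|_{[ρ,ρ+1]×I}‖₂ ). (Paper's Proposition 9.1: the exponentially weighted 3-norm of u in a neck is controlled by its ends and its J-antiholomorphic derivative.) -/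

import Mathlib

open MeasureTheory Real Set Filter

noncomputable section

abbrev Cn (n : ℕ) := EuclideanSpace ℂ (Fin n)

/-- Partial derivative in the `s`-direction. -/
def pdS {E : Type*} [NormedAddCommGroup E] [NormedSpace ℝ E] (f : ℝ × ℝ → E) (p : ℝ × ℝ) : E :=
  fderiv ℝ f p (1, 0)

/-- Partial derivative in the `t`-direction. -/
def pdT {E : Type*} [NormedAddCommGroup E] [NormedSpace ℝ E] (f : ℝ × ℝ → E) (p : ℝ × ℝ) : E :=
  fderiv ℝ f p (0, 1)

/-- The standard ∂̄-operator: ∂̄f = (1/2)(∂_s f + i ∂_t f). -/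
def dbar {E : Type*} [NormedAddCommGroup E] [NormedSpace ℂ E] (f : ℝ × ℝ → E) (p : ℝ × ℝ) : E :=
  (2⁻¹ : ℝ) • (pdS f p + Complex.I • pdT f p)

/-- `cexp s t = e^{2π(s+it)}`. -/
def cexp (s t : ℝ) : ℂ :=
  Complex.exp (((2 * π * s : ℝ) : ℂ) + ((2 * π * t : ℝ) : ℂ) * Complex.I)

/-- The `m`-th Fourier coefficient of `f` at `s`. -/
def fCoef {n : ℕ} (f : ℝ × ℝ → Cn n) (m : ℤ) (s : ℝ) : Cn n :=
  ∫ t in (0:ℝ)..1, Complex.exp (-(((2 * π * (m:ℝ) * t : ℝ) : ℂ) * Complex.I)) • f (s, t)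

/-- Unweighted Sobolev `k`-norm of `f` over `U`. -/
def sobNorm {E : Type*} [NormedAddCommGroup E] [NormedSpace ℝ E] (k : ℕ)
    (f : ℝ × ℝ → E) (U : Set (ℝ × ℝ)) : ℝ :=
  Real.sqrt (∫ p in U, ∑ j ∈ Finset.range (k + 1), ‖iteratedFDeriv ℝ j f p‖ ^ 2)

/-- Weighted Sobolev `(k,δ)`-norm of `f` over `U` with weight `e^{2δ|s|}`. -/
def sobNormW {E : Type*} [NormedAddCommGroup E] [NormedSpace ℝ E] (k : ℕ) (δ : ℝ)
    (f : ℝ × ℝ → E) (U : Set (ℝ × ℝ)) : ℝ :=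
  Real.sqrt (∫ p in U,
    (∑ j ∈ Finset.range (k + 1), ‖iteratedFDeriv ℝ j f p‖ ^ 2) * Real.exp (2 * δ * |p.1|))

/-- Hat-norm: weighted Sobolev `(k,δ)`-norm with weight `e^{2δ(r−|s|)}` (big in the middle). -/
def hatNorm {E : Type*} [NormedAddCommGroup E] [NormedSpace ℝ E] (k : ℕ) (δ r : ℝ)
    (f : ℝ × ℝ → E) (U : Set (ℝ × ℝ)) : ℝ :=
  Real.sqrt (∫ p in U,
    (∑ j ∈ Finset.range (k + 1), ‖iteratedFDeriv ℝ j f p‖ ^ 2) * Real.exp (2 * δ * (r - |p.1|)))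

/-- The standard complex structure on ℝ^{2n} ≅ ℂⁿ: multiplication by `i`. -/
def Jstd (n : ℕ) : Cn n →L[ℝ] Cn n :=
  (Complex.I • ContinuousLinearMap.id ℂ (Cn n)).restrictScalars ℝ

/-- The ∂̄-operator twisted by an almost complex structure `J` on the target:
∂̄_J f = (1/2)(∂_s f + J(f) ∂_t f). -/
def dbarJ {n : ℕ} (J : Cn n → (Cn n →L[ℝ] Cn n)) (f : ℝ × ℝ → Cn n) (p : ℝ × ℝ) : Cn n :=
  (2⁻¹ : ℝ) • (pdS f p + (J (f p)) (pdT f p))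

open scoped ContDiff Topology

/-!
Subtract from `u` its mean `c` over the middle circle `s = 0`. Then `v = u - c` solves
`∂ₛv + A ∂ₜv = 2 ∂̄_J u` with `A = J ∘ u` close to `J_std`, and the derivatives of `A` are
controlled by those of `v`.

Order zero: after a cutoff, the `m`-th Fourier mode of `v` solves an equation `y' = 2πm y + g`
with `y = 0` at both ends. Multiplying by the weight `e^{δ(ρ-|s|)}` shifts `2πm` by `±δ`, so that
for `m ≠ 0` a spectral gap `2π - δ` remains. The mode `m = 0` vanishes at `s = 0`, the peak of the
weight, so on each half of the neck the monotonicity of the weight gives the gap `δ`. Replacing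
`J_std` by `A` costs a small multiple of the first derivatives.

Higher orders: for a compactly supported `k`, the `L²` norms of `dk` and of `∂ₛk + J_std ∂ₜk`
agree because the cross term is a divergence. Applied to derivatives of `v` multiplied by a cutoff
weight, this bounds each order by the previous one up to commutators, which are at least quadratic
in the derivatives of `v`; since `sup |u|` is small, Gagliardo–Nirenberg interpolation absorbs
them. The derivatives of the cutoff weight are bounded by the weight itself on the neck, and by a
constant on the two ends.
-/

/-! ### Partial derivatives on the cylinder -/

section PartialDerivatives

variable {E F : Type*} [NormedAddCommGroup E] [NormedSpace ℝ E]
  [NormedAddCommGroup F] [NormedSpace ℝ F]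

/-- The coordinate vectors of the cylinder: `axis 0` points along `s`, `axis 1` along `t`. -/
def axis : Fin 2 → ℝ × ℝ := ![(1, 0), (0, 1)]

/-- The partial derivative along `axis i`; `pd 0` is `pdS` and `pd 1` is `pdT`, and the common
index allows sums over both directions. -/
def pd (i : Fin 2) (f : ℝ × ℝ → E) (p : ℝ × ℝ) : E :=
  fderiv ℝ f p (axis i)

theorem norm_axis (i : Fin 2) : ‖axis i‖ = 1 := by
  fin_cases i <;> simp [axis, Prod.norm_def]

theorem contDiff_pd {f : ℝ × ℝ → E} (hf : ContDiff ℝ ∞ f) (i : Fin 2) : ContDiff ℝ ∞ (pd i f) :=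
  (hf.fderiv_right (by simp)).clm_apply contDiff_const

theorem continuous_pd {f : ℝ × ℝ → E} (hf : ContDiff ℝ ∞ f) (i : Fin 2) : Continuous (pd i f) :=
  (contDiff_pd hf i).continuous

theorem periodic_pd {f : ℝ × ℝ → E} {c : ℝ × ℝ} (hf : Function.Periodic f c) (i : Fin 2) :
    Function.Periodic (pd i f) c := by
  intro p
  simp only [pd, ← fderiv_comp_add_right, hf.funext]

theorem pd_comm {f : ℝ × ℝ → E} (hf : ContDiff ℝ ∞ f) (i j : Fin 2) :
    pd i (pd j f) = pd j (pd i f) := by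
  have hf' : Differentiable ℝ (fderiv ℝ f) :=
    (hf.fderiv_right (m := ∞) (by simp)).differentiable (by simp)
  have pd_pd (i j : Fin 2) (p : ℝ × ℝ) :
      pd i (pd j f) p = fderiv ℝ (fderiv ℝ f) p (axis i) (axis j) := by
    have h := (hf' p).hasFDerivAt.clm_apply (hasFDerivAt_const (axis j) p)
    exact (DFunLike.congr_fun h.fderiv (axis i)).trans (by simp)
  funext p
  have hsymm : IsSymmSndFDerivAt ℝ f p :=
    hf.contDiffAt.isSymmSndFDerivAt (by simp [← WithTop.coe_ofNat])
  rw [pd_pd, pd_pd, hsymm]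

theorem pd_const (c : E) (i : Fin 2) (p : ℝ × ℝ) : pd i (fun _ => c) p = 0 := by
  simp [pd]

theorem pd_neg (f : ℝ × ℝ → E) (i : Fin 2) (p : ℝ × ℝ) : pd i (fun q => -f q) p = -pd i f p := by
  simp [pd]

theorem pd_add {f g : ℝ × ℝ → E} (hf : ContDiff ℝ ∞ f) (hg : ContDiff ℝ ∞ g) (i : Fin 2)
    (p : ℝ × ℝ) : pd i (fun q => f q + g q) p = pd i f p + pd i g p := by
  simp [pd, fderiv_fun_add (hf.differentiable (by simp) p) (hg.differentiable (by simp) p)]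

theorem pd_sum {ι : Type*} (t : Finset ι) {f : ι → ℝ × ℝ → E} (hf : ∀ j, ContDiff ℝ ∞ (f j))
    (i : Fin 2) (p : ℝ × ℝ) : pd i (fun q => ∑ j ∈ t, f j q) p = ∑ j ∈ t, pd i (f j) p := by
  simp [pd, fderiv_fun_sum fun j _ => (hf j).differentiable (by simp) p]

theorem pd_sub_const (f : ℝ × ℝ → E) (c : E) (i : Fin 2) : pd i (fun p => f p - c) = pd i f := by
  funext p
  simp [pd, fderiv_sub_const]

theorem pd_mul {f g : ℝ × ℝ → ℝ} (hf : ContDiff ℝ ∞ f) (hg : ContDiff ℝ ∞ g) (i : Fin 2)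
    (p : ℝ × ℝ) : pd i (fun q => f q * g q) p = f p * pd i g p + pd i f p * g p := by
  simp [pd, fderiv_fun_mul (hf.differentiable (by simp) p) (hg.differentiable (by simp) p),
    mul_comm]

theorem pd_pow {f : ℝ × ℝ → ℝ} (hf : ContDiff ℝ ∞ f) (k : ℕ) (i : Fin 2) (p : ℝ × ℝ) :
    pd i (fun q => f q ^ (k + 1)) p = (k + 1) * f p ^ k * pd i f p := by
  simp [pd, fderiv_fun_pow _ (hf.differentiable (by simp) p)]

theorem pd_smul {f : ℝ × ℝ → ℝ} {g : ℝ × ℝ → E} (hf : ContDiff ℝ ∞ f) (hg : ContDiff ℝ ∞ g)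
    (i : Fin 2) (p : ℝ × ℝ) : pd i (fun q => f q • g q) p = f p • pd i g p + pd i f p • g p := by
  simp [pd, fderiv_fun_smul (hf.differentiable (by simp) p) (hg.differentiable (by simp) p)]

theorem pd_clm_apply {A : ℝ × ℝ → E →L[ℝ] F} {g : ℝ × ℝ → E} (hA : ContDiff ℝ ∞ A)
    (hg : ContDiff ℝ ∞ g) (i : Fin 2) (p : ℝ × ℝ) :
    pd i (fun q => A q (g q)) p = A p (pd i g p) + pd i A p (g p) := by
  simp [pd, fderiv_clm_apply (hA.differentiable (by simp) p) (hg.differentiable (by simp) p)]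

theorem pd_clm_comp (A : E →L[ℝ] F) {g : ℝ × ℝ → E} (hg : ContDiff ℝ ∞ g) (i : Fin 2)
    (p : ℝ × ℝ) : pd i (fun q => A (g q)) p = A (pd i g p) := by
  rw [pd_clm_apply contDiff_const hg, pd_const, zero_apply, add_zero]

theorem pd_comp {f : E → F} {u : ℝ × ℝ → E} (hf : ContDiff ℝ ∞ f) (hu : ContDiff ℝ ∞ u)
    (i : Fin 2) (p : ℝ × ℝ) : pd i (fun q => f (u q)) p = fderiv ℝ f (u p) (pd i u p) := by
  simp only [pd]
  rw [fderiv_fun_comp p (hf.differentiable (by simp) _) (hu.differentiable (by simp) p)]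
  simp

theorem hasDerivAt_pd_zero {f : ℝ × ℝ → E} (hf : ContDiff ℝ ∞ f) (s t : ℝ) :
    HasDerivAt (fun s => f (s, t)) (pd 0 f (s, t)) s :=
  (hf.differentiable (by simp) (s, t)).hasFDerivAt.comp_hasDerivAt s
    ((hasDerivAt_id s).prodMk (hasDerivAt_const s t))

theorem hasDerivAt_pd_one {f : ℝ × ℝ → E} (hf : ContDiff ℝ ∞ f) (s t : ℝ) :
    HasDerivAt (fun t => f (s, t)) (pd 1 f (s, t)) t :=
  (hf.differentiable (by simp) (s, t)).hasFDerivAt.comp_hasDerivAt t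
    ((hasDerivAt_const t s).prodMk (hasDerivAt_id t))

theorem pd_zero_comp_fst {w : ℝ → ℝ} (hw : ContDiff ℝ ∞ w) (p : ℝ × ℝ) :
    pd 0 (fun q => w q.1) p = deriv w p.1 :=
  (hasDerivAt_pd_zero (hw.comp contDiff_fst) p.1 p.2).deriv.symm

theorem pd_one_comp_fst {w : ℝ → ℝ} (hw : ContDiff ℝ ∞ w) (p : ℝ × ℝ) :
    pd 1 (fun q => w q.1) p = 0 :=
  (hasDerivAt_pd_one (hw.comp contDiff_fst) p.1 p.2).unique (hasDerivAt_const p.2 (w p.1))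

end PartialDerivatives

theorem pd_inner {E : Type*} [NormedAddCommGroup E] [InnerProductSpace ℝ E] {f g : ℝ × ℝ → E}
    (hf : ContDiff ℝ ∞ f) (hg : ContDiff ℝ ∞ g) (i : Fin 2) (p : ℝ × ℝ) :
    pd i (fun q => inner ℝ (f q) (g q)) p
      = inner ℝ (f p) (pd i g p) + inner ℝ (pd i f p) (g p) :=
  fderiv_inner_apply ℝ (hf.differentiable (by simp) p) (hg.differentiable (by simp) p) _

/-! ### Integration over the cylinder -/

section CylinderIntegrals

/-- The cylinder `[a, b] × I`, cut open along `t = 0`; functions on `ℝ × I` are modelled by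
functions on `ℝ × ℝ` of period `(0, 1)`. -/
def cyl (a b : ℝ) : Set (ℝ × ℝ) :=
  Icc a b ×ˢ Icc 0 1

theorem isCompact_cyl (a b : ℝ) : IsCompact (cyl a b) :=
  isCompact_Icc.prod isCompact_Icc

theorem measurableSet_cyl (a b : ℝ) : MeasurableSet (cyl a b) :=
  measurableSet_Icc.prod measurableSet_Icc

theorem integrableOn_cyl {G : ℝ × ℝ → ℝ} (hG : Continuous G) (a b : ℝ) :
    IntegrableOn G (cyl a b) :=
  hG.continuousOn.integrableOn_compact (isCompact_cyl a b)

theorem setIntegral_cyl_mono {a b : ℝ} {G H : ℝ × ℝ → ℝ} (hG : Continuous G) (hH : Continuous H)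
    (h : ∀ p : ℝ × ℝ, p.1 ∈ Icc a b → G p ≤ H p) : ∫ p in cyl a b, G p ≤ ∫ p in cyl a b, H p :=
  setIntegral_mono_on (integrableOn_cyl hG a b) (integrableOn_cyl hH a b) (measurableSet_cyl a b)
    fun p hp => h p hp.1

theorem setIntegral_cyl_eq_intervalIntegral {a b : ℝ} (hab : a ≤ b) {G : ℝ × ℝ → ℝ}
    (hG : Continuous G) :
    ∫ p in cyl a b, G p = ∫ s in a..b, ∫ t in (0 : ℝ)..1, G (s, t) := by
  rw [cyl, Measure.volume_eq_prod, setIntegral_prod _ (integrableOn_cyl hG a b),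
    intervalIntegral.integral_of_le hab, integral_Icc_eq_integral_Ioc]
  simp only [intervalIntegral.integral_of_le zero_le_one, integral_Icc_eq_integral_Ioc]

theorem setIntegral_cyl_eq_intervalIntegral_symm {a b : ℝ} (hab : a ≤ b) {G : ℝ × ℝ → ℝ}
    (hG : Continuous G) :
    ∫ p in cyl a b, G p = ∫ t in (0 : ℝ)..1, ∫ s in a..b, G (s, t) := by
  rw [setIntegral_cyl_eq_intervalIntegral hab hG]
  refine intervalIntegral_intervalIntegral_swap ((integrableOn_cyl hG a b).mono_set ?_)
  rw [uIoc_of_le hab, uIoc_of_le zero_le_one]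
  exact prod_mono Ioc_subset_Icc_self Ioc_subset_Icc_self

theorem setIntegral_cyl_pd_zero {a b : ℝ} (hab : a ≤ b) {G : ℝ × ℝ → ℝ} (hG : ContDiff ℝ ∞ G)
    (ha : ∀ t, G (a, t) = 0) (hb : ∀ t, G (b, t) = 0) : ∫ p in cyl a b, pd 0 G p = 0 := by
  rw [setIntegral_cyl_eq_intervalIntegral_symm hab (continuous_pd hG 0)]
  have slice (t : ℝ) : ∫ s in a..b, pd 0 G (s, t) = 0 := by
    rw [intervalIntegral.integral_eq_sub_of_hasDerivAt (fun s _ => hasDerivAt_pd_zero hG s t)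
      (((continuous_pd hG 0).comp (.prodMk_left t)).intervalIntegrable _ _), ha, hb, sub_zero]
  simp [slice]

theorem setIntegral_cyl_pd_one {a b : ℝ} (hab : a ≤ b) {G : ℝ × ℝ → ℝ} (hG : ContDiff ℝ ∞ G)
    (hper : Function.Periodic G (0, 1)) : ∫ p in cyl a b, pd 1 G p = 0 := by
  rw [setIntegral_cyl_eq_intervalIntegral hab (continuous_pd hG 1)]
  have slice (s : ℝ) : ∫ t in (0 : ℝ)..1, pd 1 G (s, t) = 0 := by
    rw [intervalIntegral.integral_eq_sub_of_hasDerivAt (fun t _ => hasDerivAt_pd_one hG s t)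
      (((continuous_pd hG 1).comp (.prodMk_right s)).intervalIntegrable _ _), sub_eq_zero]
    simpa using hper (s, 0)
  simp [slice]

theorem setIntegral_cyl_le_of_le_divergence {a b : ℝ} (hab : a ≤ b) {G : Fin 2 → ℝ × ℝ → ℝ}
    {A B : ℝ × ℝ → ℝ} (hG : ∀ i, ContDiff ℝ ∞ (G i)) (ha : ∀ t, G 0 (a, t) = 0)
    (hb : ∀ t, G 0 (b, t) = 0) (hper : Function.Periodic (G 1) (0, 1)) (hA : Continuous A)
    (hB : Continuous B) (h : ∀ p : ℝ × ℝ, p.1 ∈ Icc a b → A p ≤ ∑ i, pd i (G i) p + B p) :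
    ∫ p in cyl a b, A p ≤ ∫ p in cyl a b, B p := by
  have hpd (i : Fin 2) : Continuous (pd i (G i)) := continuous_pd (hG i) i
  refine (setIntegral_cyl_mono hA (by fun_prop) h).trans_eq ?_
  rw [integral_add (integrableOn_cyl (by fun_prop) a b) (integrableOn_cyl hB a b),
    integral_finsetSum _ fun i _ => integrableOn_cyl (hpd i) a b, Fin.sum_univ_two,
    setIntegral_cyl_pd_zero hab (hG 0) ha hb, setIntegral_cyl_pd_one hab (hG 1) hper]
  simp

end CylinderIntegrals

section WeightedIntegrals

/-- The integral of `G` over `[a, b] × I` against the squared weight `w(s)²`. -/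
def wInt (a b : ℝ) (w : ℝ → ℝ) (G : ℝ × ℝ → ℝ) : ℝ :=
  ∫ p in cyl a b, w p.1 ^ 2 * G p

variable {a b : ℝ} {w : ℝ → ℝ} {G H : ℝ × ℝ → ℝ}

theorem wInt_mono (hw : Continuous w) (hG : Continuous G) (hH : Continuous H)
    (h : ∀ p : ℝ × ℝ, p.1 ∈ Icc a b → G p ≤ H p) : wInt a b w G ≤ wInt a b w H :=
  setIntegral_cyl_mono (by fun_prop) (by fun_prop) fun p hp =>
    mul_le_mul_of_nonneg_left (h p hp) (sq_nonneg _)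

theorem wInt_nonneg (hG : ∀ p, 0 ≤ G p) : 0 ≤ wInt a b w G :=
  integral_nonneg fun p => mul_nonneg (sq_nonneg _) (hG p)

theorem wInt_add (hw : Continuous w) (hG : Continuous G) (hH : Continuous H) :
    wInt a b w (fun p => G p + H p) = wInt a b w G + wInt a b w H := by
  simp only [wInt, mul_add]
  exact integral_add (integrableOn_cyl (by fun_prop) a b) (integrableOn_cyl (by fun_prop) a b)

theorem wInt_const_mul (c : ℝ) : wInt a b w (fun p => c * G p) = c * wInt a b w G := by
  simp only [wInt, mul_left_comm _ c]
  exact integral_const_mul _ _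

theorem wInt_sum {ι : Type*} (t : Finset ι) {G : ι → ℝ × ℝ → ℝ} (hw : Continuous w)
    (hG : ∀ i, Continuous (G i)) :
    wInt a b w (fun p => ∑ i ∈ t, G i p) = ∑ i ∈ t, wInt a b w (G i) := by
  simp only [wInt, Finset.mul_sum]
  exact integral_finsetSum _ fun i _ => integrableOn_cyl (by fun_prop) a b

theorem wInt_mono_weight {v : ℝ → ℝ} (hv : Continuous v) (hw : Continuous w) (hG : Continuous G)
    (hG₀ : ∀ p, 0 ≤ G p) (h : ∀ s ∈ Icc a b, v s ^ 2 ≤ w s ^ 2) :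
    wInt a b v G ≤ wInt a b w G :=
  setIntegral_cyl_mono (by fun_prop) (by fun_prop) fun p hp =>
    mul_le_mul_of_nonneg_right (h p.1 hp) (hG₀ p)

theorem wInt_const_mul_weight (c : ℝ) :
    wInt a b (fun s => c * w s) G = c ^ 2 * wInt a b w G := by
  simp only [wInt, mul_pow, mul_assoc]
  exact integral_const_mul _ _

end WeightedIntegrals

/-! ### Sums of squares of partial derivatives -/

section DerivSq

variable {E : Type*} [NormedAddCommGroup E]

/-- The sum of `‖∂ᵢ₁ ⋯ ∂ᵢⱼ f‖²` over all words `i₁ … iⱼ` of length `j`, a smooth substitute for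
`‖d^{(j)} f‖²`. -/
def derivSq [NormedSpace ℝ E] : ℕ → (ℝ × ℝ → E) → ℝ × ℝ → ℝ
  | 0, f, p => ‖f p‖ ^ 2
  | j + 1, f, p => ∑ i, derivSq j (pd i f) p

section NormedSpace

variable [NormedSpace ℝ E]

theorem derivSq_zero (f : ℝ × ℝ → E) (p : ℝ × ℝ) : derivSq 0 f p = ‖f p‖ ^ 2 :=
  rfl

theorem derivSq_nonneg (j : ℕ) (f : ℝ × ℝ → E) (p : ℝ × ℝ) : 0 ≤ derivSq j f p := by
  induction j generalizing f with
  | zero => exact sq_nonneg _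
  | succ j ih => exact Finset.sum_nonneg fun i _ => ih (pd i f)

theorem periodic_derivSq {f : ℝ × ℝ → E} {c : ℝ × ℝ} (hf : Function.Periodic f c) (j : ℕ) :
    Function.Periodic (derivSq j f) c := by
  induction j generalizing f with
  | zero => exact hf.comp fun x => ‖x‖ ^ 2
  | succ j ih => exact fun p => Finset.sum_congr rfl fun i _ => ih (periodic_pd hf i) p

theorem derivSq_pd_le (j : ℕ) (f : ℝ × ℝ → E) (i : Fin 2) (p : ℝ × ℝ) :
    derivSq j (pd i f) p ≤ derivSq (j + 1) f p :=
  Finset.single_le_sum (f := fun i => derivSq j (pd i f) p) (fun _ _ => derivSq_nonneg j _ p)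
    (Finset.mem_univ i)

theorem norm_pd_le_sqrt (f : ℝ × ℝ → E) (i : Fin 2) (p : ℝ × ℝ) :
    ‖pd i f p‖ ≤ √(derivSq 1 f p) :=
  Real.le_sqrt_of_sq_le (derivSq_pd_le 0 f i p)

theorem norm_pd_pd_le_sqrt (f : ℝ × ℝ → E) (i j : Fin 2) (p : ℝ × ℝ) :
    ‖pd i (pd j f) p‖ ≤ √(derivSq 2 f p) :=
  (norm_pd_le_sqrt _ i p).trans (Real.sqrt_le_sqrt (derivSq_pd_le 1 f j p))

theorem norm_pd_pd_pd_le_sqrt (f : ℝ × ℝ → E) (i j k : Fin 2) (p : ℝ × ℝ) :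
    ‖pd i (pd j (pd k f)) p‖ ≤ √(derivSq 3 f p) :=
  (norm_pd_pd_le_sqrt _ i j p).trans (Real.sqrt_le_sqrt (derivSq_pd_le 2 f k p))

theorem derivSq_succ_sub_const (j : ℕ) (f : ℝ × ℝ → E) (c : E) :
    derivSq (j + 1) (fun p => f p - c) = derivSq (j + 1) f := by
  simp only [derivSq, pd_sub_const]

end NormedSpace

section InnerProductSpace

variable [InnerProductSpace ℝ E] {f : ℝ × ℝ → E}

theorem contDiff_derivSq (hf : ContDiff ℝ ∞ f) (j : ℕ) : ContDiff ℝ ∞ (derivSq j f) := by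
  induction j generalizing f with
  | zero => exact hf.norm_sq ℝ
  | succ j ih => exact ContDiff.sum fun i _ => ih (contDiff_pd hf i)

theorem continuous_derivSq (hf : ContDiff ℝ ∞ f) (j : ℕ) : Continuous (derivSq j f) :=
  (contDiff_derivSq hf j).continuous

theorem wInt_derivSq_succ {a b : ℝ} {w : ℝ → ℝ} (hw : Continuous w) (hf : ContDiff ℝ ∞ f)
    (j : ℕ) : wInt a b w (derivSq (j + 1) f) = ∑ i, wInt a b w (derivSq j (pd i f)) :=
  wInt_sum Finset.univ hw fun i => continuous_derivSq (contDiff_pd hf i) j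

end InnerProductSpace

end DerivSq

theorem norm_add_sq_le_two_mul {E : Type*} [SeminormedAddCommGroup E] (x y : E) :
    ‖x + y‖ ^ 2 ≤ 2 * ‖x‖ ^ 2 + 2 * ‖y‖ ^ 2 := by
  calc ‖x + y‖ ^ 2 ≤ (‖x‖ + ‖y‖) ^ 2 := by gcongr; exact norm_add_le x y
    _ ≤ 2 * ‖x‖ ^ 2 + 2 * ‖y‖ ^ 2 := by linarith [add_sq_le (a := ‖x‖) (b := ‖y‖)]

theorem norm_sub_sq_le_two_mul {E : Type*} [SeminormedAddCommGroup E] (x y : E) :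
    ‖x - y‖ ^ 2 ≤ 2 * ‖x‖ ^ 2 + 2 * ‖y‖ ^ 2 := by
  simpa only [sub_eq_add_neg, norm_neg] using norm_add_sq_le_two_mul x (-y)

theorem norm_real_smul_sq {E : Type*} [SeminormedAddCommGroup E] [NormedSpace ℝ E] (c : ℝ)
    (x : E) : ‖c • x‖ ^ 2 = c ^ 2 * ‖x‖ ^ 2 := by
  rw [norm_smul, mul_pow, Real.norm_eq_abs, sq_abs]

/-! ### The linear estimate for Cauchy–Riemann operators close to a constant one -/

section LinearEstimate

variable {E : Type*} [NormedAddCommGroup E]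

/-- The Cauchy–Riemann operator `∂ₛ h + A ∂ₜ h` with variable coefficient `A`. -/
def cauchyRiemann [NormedSpace ℝ E] (A : ℝ × ℝ → E →L[ℝ] E) (h : ℝ × ℝ → E) (p : ℝ × ℝ) : E :=
  pd 0 h p + A p (pd 1 h p)

/-- Smooth functions of `s` vanishing at both ends of `[a, b]`: the weights for which integration
by parts over `[a, b] × I` has no boundary terms. -/
structure IsCutoff (a b : ℝ) (w : ℝ → ℝ) : Prop where
  contDiff : ContDiff ℝ ∞ w
  left_eq_zero : w a = 0
  right_eq_zero : w b = 0

theorem IsCutoff.continuous {a b : ℝ} {w : ℝ → ℝ} (hw : IsCutoff a b w) : Continuous w :=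
  hw.contDiff.continuous

theorem IsCutoff.continuous_deriv {a b : ℝ} {w : ℝ → ℝ} (hw : IsCutoff a b w) :
    Continuous (deriv w) :=
  hw.contDiff.continuous_deriv (by simp)

theorem contDiff_cauchyRiemann [NormedSpace ℝ E] {A : ℝ × ℝ → E →L[ℝ] E} {h : ℝ × ℝ → E}
    (hA : ContDiff ℝ ∞ A) (hh : ContDiff ℝ ∞ h) : ContDiff ℝ ∞ (cauchyRiemann A h) :=
  (contDiff_pd hh 0).add (hA.clm_apply (contDiff_pd hh 1))

theorem cauchyRiemann_smul [NormedSpace ℝ E] {A : ℝ × ℝ → E →L[ℝ] E} {h : ℝ × ℝ → E}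
    {w : ℝ → ℝ} (hw : ContDiff ℝ ∞ w) (hh : ContDiff ℝ ∞ h) (p : ℝ × ℝ) :
    cauchyRiemann A (fun q => w q.1 • h q) p
      = w p.1 • cauchyRiemann A h p + deriv w p.1 • h p := by
  have hw₁ : ContDiff ℝ ∞ fun q : ℝ × ℝ => w q.1 := hw.comp contDiff_fst
  simp only [cauchyRiemann, pd_smul hw₁ hh, pd_zero_comp_fst hw, pd_one_comp_fst hw, zero_smul,
    add_zero, map_smul, smul_add]
  abel

variable [InnerProductSpace ℝ E]

/-- Linear complex structures orthogonal for the inner product, described by the two properties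
that integration by parts uses. -/
structure IsSkewIsometry (J₀ : E →L[ℝ] E) : Prop where
  norm_map : ∀ x, ‖J₀ x‖ = ‖x‖
  inner_map_left : ∀ x y, inner ℝ (J₀ x) y = -inner ℝ x (J₀ y)

variable {a b κ : ℝ} {w : ℝ → ℝ} {J₀ : E →L[ℝ] E} {A : ℝ × ℝ → E →L[ℝ] E} {h k : ℝ × ℝ → E}

-- The cross term `2⟨∂ₛk, J₀∂ₜk⟩` is the divergence of `(⟨k, J₀∂ₜk⟩, -⟨k, J₀∂ₛk⟩)`.
theorem setIntegral_derivSq_one_le (hJ₀ : IsSkewIsometry J₀) (hab : a ≤ b)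
    (hk : ContDiff ℝ ∞ k) (hper : Function.Periodic k (0, 1)) (ha : ∀ t, k (a, t) = 0)
    (hb : ∀ t, k (b, t) = 0) :
    ∫ p in cyl a b, derivSq 1 k p ≤ ∫ p in cyl a b, ‖cauchyRiemann (fun _ => J₀) k p‖ ^ 2 := by
  have hJk (i : Fin 2) : ContDiff ℝ ∞ fun p => J₀ (pd i k p) := J₀.contDiff.comp (contDiff_pd hk i)
  have hflux (i : Fin 2) : ContDiff ℝ ∞ fun p => (inner ℝ (k p) (J₀ (pd i k p)) : ℝ) :=
    hk.inner ℝ (hJk i)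
  refine setIntegral_cyl_le_of_le_divergence hab
    (G := ![fun p => -inner ℝ (k p) (J₀ (pd 1 k p)), fun p => inner ℝ (k p) (J₀ (pd 0 k p))])
    ?_ (by simp [ha]) (by simp [hb]) ?_ (continuous_derivSq hk 1)
    ((contDiff_cauchyRiemann contDiff_const hk).continuous.norm.pow 2) ?_
  · rw [Fin.forall_fin_two]
    exact ⟨(hflux 1).neg, hflux 0⟩
  · intro p
    simp [hper p, periodic_pd hper 0 p]
  · intro p _
    have skew : inner ℝ (pd 1 k p) (J₀ (pd 0 k p)) = -inner ℝ (pd 0 k p) (J₀ (pd 1 k p)) := by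
      rw [real_inner_comm, hJ₀.inner_map_left]
    refine le_of_eq ?_
    simp only [Fin.sum_univ_two, Matrix.cons_val_zero, Matrix.cons_val_one, pd_neg,
      pd_inner hk (hJk 1), pd_inner hk (hJk 0), pd_clm_comp J₀ (contDiff_pd hk _),
      pd_comm hk 1 0, skew, cauchyRiemann, norm_add_sq_real, hJ₀.norm_map, derivSq]
    ring

theorem norm_cauchyRiemann_const_sq_le (hκ : 4 * κ ≤ 1) {p : ℝ × ℝ} (hA : ‖A p - J₀‖ ≤ κ) :
    ‖cauchyRiemann (fun _ => J₀) k p‖ ^ 2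
      ≤ 2 * ‖cauchyRiemann A k p‖ ^ 2 + 1 / 8 * derivSq 1 k p := by
  have hsplit : cauchyRiemann (fun _ => J₀) k p
      = cauchyRiemann A k p - (A p - J₀) (pd 1 k p) := by
    simp only [cauchyRiemann, sub_apply]
    abel
  have hdiff : ‖(A p - J₀) (pd 1 k p)‖ ^ 2 ≤ 1 / 16 * derivSq 1 k p :=
    calc ‖(A p - J₀) (pd 1 k p)‖ ^ 2 ≤ (1 / 4 * ‖pd 1 k p‖) ^ 2 := by
          gcongr
          exact (A p - J₀).le_of_opNorm_le (by linarith) _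
      _ = 1 / 16 * ‖pd 1 k p‖ ^ 2 := by ring
      _ ≤ 1 / 16 * derivSq 1 k p := by gcongr; exact derivSq_pd_le 0 k 1 p
  have := norm_sub_sq_le_two_mul (cauchyRiemann A k p) ((A p - J₀) (pd 1 k p))
  rw [hsplit]
  linarith

theorem sq_mul_derivSq_one_le (hw : ContDiff ℝ ∞ w) (hh : ContDiff ℝ ∞ h) (p : ℝ × ℝ) :
    w p.1 ^ 2 * derivSq 1 h p
      ≤ 2 * derivSq 1 (fun q => w q.1 • h q) p + 2 * (deriv w p.1 ^ 2 * derivSq 0 h p) := by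
  have hw₁ : ContDiff ℝ ∞ fun q : ℝ × ℝ => w q.1 := hw.comp contDiff_fst
  have hs : w p.1 • pd 0 h p = pd 0 (fun q => w q.1 • h q) p - deriv w p.1 • h p := by
    rw [pd_smul hw₁ hh, pd_zero_comp_fst hw, add_sub_cancel_right]
  have ht : w p.1 • pd 1 h p = pd 1 (fun q => w q.1 • h q) p := by
    rw [pd_smul hw₁ hh, pd_one_comp_fst hw, zero_smul, add_zero]
  have := norm_sub_sq_le_two_mul (pd 0 (fun q => w q.1 • h q) p) (deriv w p.1 • h p)
  rw [← hs, norm_real_smul_sq, norm_real_smul_sq] at this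
  simp only [derivSq, Fin.sum_univ_two, ← ht, norm_real_smul_sq]
  nlinarith [mul_nonneg (sq_nonneg (w p.1)) (sq_nonneg ‖pd 1 h p‖)]

theorem setIntegral_derivSq_one_le_of_near (hJ₀ : IsSkewIsometry J₀) (hab : a ≤ b)
    (hA : ContDiff ℝ ∞ A) (hκ : 4 * κ ≤ 1) (hAκ : ∀ p : ℝ × ℝ, p.1 ∈ Icc a b → ‖A p - J₀‖ ≤ κ)
    (hk : ContDiff ℝ ∞ k) (hper : Function.Periodic k (0, 1)) (ha : ∀ t, k (a, t) = 0)
    (hb : ∀ t, k (b, t) = 0) :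
    ∫ p in cyl a b, derivSq 1 k p ≤ 16 / 7 * ∫ p in cyl a b, ‖cauchyRiemann A k p‖ ^ 2 := by
  have hcR (B : ℝ × ℝ → E →L[ℝ] E) (hB : ContDiff ℝ ∞ B) :
      Continuous fun p => ‖cauchyRiemann B k p‖ ^ 2 :=
    (contDiff_cauchyRiemann hB hk).continuous.norm.pow 2
  have hcA := hcR A hA
  have hcD := continuous_derivSq hk 1
  have hconst := (setIntegral_derivSq_one_le hJ₀ hab hk hper ha hb).trans
    (setIntegral_cyl_mono (hcR _ contDiff_const) (by fun_prop) fun p hp =>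
      norm_cauchyRiemann_const_sq_le hκ (hAκ p hp))
  rw [integral_add (integrableOn_cyl (by fun_prop) a b) (integrableOn_cyl (by fun_prop) a b),
    integral_const_mul, integral_const_mul] at hconst
  linarith

theorem wInt_derivSq_one_le (hJ₀ : IsSkewIsometry J₀) (hab : a ≤ b) (hw : IsCutoff a b w)
    (hA : ContDiff ℝ ∞ A) (hκ : 4 * κ ≤ 1) (hAκ : ∀ p : ℝ × ℝ, p.1 ∈ Icc a b → ‖A p - J₀‖ ≤ κ)
    (hh : ContDiff ℝ ∞ h) (hper : Function.Periodic h (0, 1)) :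
    wInt a b w (derivSq 1 h) ≤ 16 * wInt a b w (derivSq 0 (cauchyRiemann A h))
      + 12 * wInt a b (deriv w) (derivSq 0 h) := by
  set k : ℝ × ℝ → E := fun q => w q.1 • h q with hk_def
  have hk : ContDiff ℝ ∞ k := (hw.contDiff.comp contDiff_fst).smul hh
  have hkper : Function.Periodic k (0, 1) := fun p => by simp [hk_def, hper p]
  have hnear := setIntegral_derivSq_one_le_of_near hJ₀ hab hA hκ hAκ hk hkper
    (fun t => by simp [hk_def, hw.left_eq_zero]) (fun t => by simp [hk_def, hw.right_eq_zero])
  have hwc := hw.continuous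
  have hwc' := hw.continuous_deriv
  have hcR := continuous_derivSq (contDiff_cauchyRiemann hA hh) 0
  have hcRk := (contDiff_cauchyRiemann hA hk).continuous
  have hc₀ := continuous_derivSq hh 0
  have hc₁ := continuous_derivSq hh 1
  have hck := continuous_derivSq hk 1
  have hlower := setIntegral_cyl_mono (a := a) (b := b) (by fun_prop) (by fun_prop)
    fun p _ => sq_mul_derivSq_one_le hw.contDiff hh p
  have hupper : ∫ p in cyl a b, ‖cauchyRiemann A k p‖ ^ 2
      ≤ ∫ p in cyl a b, 2 * (w p.1 ^ 2 * derivSq 0 (cauchyRiemann A h) p)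
        + 2 * (deriv w p.1 ^ 2 * derivSq 0 h p) :=
    setIntegral_cyl_mono (by fun_prop) (by fun_prop) fun p _ => by
      simp only [hk_def, cauchyRiemann_smul hw.contDiff hh, derivSq, ← norm_real_smul_sq]
      exact norm_add_sq_le_two_mul _ _
  have hintegrable {G : ℝ × ℝ → ℝ} (hG : Continuous G) := integrableOn_cyl hG a b
  rw [integral_add (hintegrable (by fun_prop)) (hintegrable (by fun_prop)), integral_const_mul,
    integral_const_mul] at hlower hupper
  have := wInt_nonneg (a := a) (b := b) (w := w) (derivSq_nonneg 0 (cauchyRiemann A h))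
  have := wInt_nonneg (a := a) (b := b) (w := deriv w) (derivSq_nonneg 0 h)
  simp only [wInt] at *
  linarith

end LinearEstimate

/-! ### Interpolation inequalities of Gagliardo–Nirenberg type -/

section WeightedDivergence

variable {a b : ℝ} {w : ℝ → ℝ} {F : Fin 2 → ℝ × ℝ → ℝ}

theorem sum_pd_sq_mul (hw : ContDiff ℝ ∞ w) (hF : ∀ i, ContDiff ℝ ∞ (F i)) (p : ℝ × ℝ) :
    ∑ i, pd i (fun q => w q.1 ^ 2 * F i q) p
      = w p.1 ^ 2 * ∑ i, pd i (F i) p + 2 * (w p.1 * deriv w p.1 * F 0 p) := by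
  have hw₁ : ContDiff ℝ ∞ fun q : ℝ × ℝ => w q.1 := hw.comp contDiff_fst
  simp only [Fin.sum_univ_two, pd_mul (hw₁.pow 2) (hF _), pd_pow hw₁ 1, pd_zero_comp_fst hw,
    pd_one_comp_fst hw]
  push_cast
  ring

theorem two_mul_mul_mul_le {x y f c d : ℝ} (hc : 0 ≤ c) (hd : 0 ≤ d) (hf : f ^ 2 ≤ c * d) :
    -(2 * (x * y * f)) ≤ x ^ 2 * c + y ^ 2 * d := by
  have hprod : (x * y * f) ^ 2 ≤ (x ^ 2 * c) * (y ^ 2 * d) := by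
    calc (x * y * f) ^ 2 = (x * y) ^ 2 * f ^ 2 := by ring
      _ ≤ (x * y) ^ 2 * (c * d) := by gcongr
      _ = (x ^ 2 * c) * (y ^ 2 * d) := by ring
  have hsq : (-(2 * (x * y * f))) ^ 2 ≤ (x ^ 2 * c + y ^ 2 * d) ^ 2 := by
    nlinarith [sq_nonneg (x ^ 2 * c - y ^ 2 * d)]
  exact le_of_sq_le_sq hsq (by positivity)

-- `C` and `D` absorb the boundary-layer term `2ww'F₀` produced by differentiating the weight.
theorem wInt_le_of_le_divergence (hab : a ≤ b) (hw : IsCutoff a b w)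
    (hF : ∀ i, ContDiff ℝ ∞ (F i)) (hper : Function.Periodic (F 1) (0, 1))
    {A B C D : ℝ × ℝ → ℝ} (hA : Continuous A) (hB : Continuous B) (hD : Continuous D)
    (hC₀ : ∀ p, 0 ≤ C p) (hD₀ : ∀ p, 0 ≤ D p)
    (hFCD : ∀ p : ℝ × ℝ, p.1 ∈ Icc a b → F 0 p ^ 2 ≤ C p * D p)
    (hdiv : ∀ p : ℝ × ℝ, p.1 ∈ Icc a b → A p + C p ≤ ∑ i, pd i (F i) p + B p) :
    wInt a b w A ≤ wInt a b w B + wInt a b (deriv w) D := by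
  have hwc := hw.continuous
  have hwc' := hw.continuous_deriv
  have hsplit : ∫ p in cyl a b, w p.1 ^ 2 * B p + deriv w p.1 ^ 2 * D p
      = wInt a b w B + wInt a b (deriv w) D :=
    integral_add (integrableOn_cyl (by fun_prop) a b) (integrableOn_cyl (by fun_prop) a b)
  rw [← hsplit]
  refine setIntegral_cyl_le_of_le_divergence hab (G := fun i q => w q.1 ^ 2 * F i q)
    (fun i => ((hw.contDiff.comp contDiff_fst).pow 2).mul (hF i))
    (fun t => by simp [hw.left_eq_zero]) (fun t => by simp [hw.right_eq_zero])
    (fun p => by simp [hper p]) (by fun_prop) (by fun_prop) fun p hp => ?_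
  rw [sum_pd_sq_mul hw.contDiff hF]
  have := mul_le_mul_of_nonneg_left (hdiv p hp) (sq_nonneg (w p.1))
  have := two_mul_mul_mul_le (x := w p.1) (y := deriv w p.1) (hC₀ p) (hD₀ p) (hFCD p hp)
  linarith

end WeightedDivergence

section GagliardoNirenberg

variable {E : Type*} [NormedAddCommGroup E] [InnerProductSpace ℝ E] {u : ℝ × ℝ → E}

theorem abs_inner_le_mul {x y : E} {c d : ℝ} (hx : ‖x‖ ≤ c) (hy : ‖y‖ ≤ d) :
    |inner ℝ x y| ≤ c * d :=
  (abs_real_inner_le_norm x y).trans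
    (mul_le_mul hx hy (norm_nonneg y) ((norm_nonneg x).trans hx))

theorem pd_derivSq_one (hu : ContDiff ℝ ∞ u) (i : Fin 2) :
    pd i (derivSq 1 u) = fun p => 2 * ∑ j, inner ℝ (pd j u p) (pd i (pd j u) p) := by
  funext p
  have hnorm : derivSq 1 u = fun q => ∑ j, inner ℝ (pd j u q) (pd j u q) := by
    funext q
    simp only [derivSq, real_inner_self_eq_norm_sq]
  have hd (j : Fin 2) := contDiff_pd hu j
  rw [hnorm, pd_sum _ fun j => (hd j).inner ℝ (hd j), Finset.mul_sum]
  refine Finset.sum_congr rfl fun j _ => ?_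
  rw [pd_inner (hd j) (hd j), real_inner_comm (pd j u p) (pd i (pd j u) p), two_mul]

theorem abs_pd_derivSq_one_le (hu : ContDiff ℝ ∞ u) (i : Fin 2) (p : ℝ × ℝ) :
    |pd i (derivSq 1 u) p| ≤ 4 * (√(derivSq 1 u p) * √(derivSq 2 u p)) := by
  simp only [pd_derivSq_one hu, Fin.sum_univ_two, abs_mul, abs_two]
  have bound (j : Fin 2) :=
    abs_inner_le_mul (norm_pd_le_sqrt u j p) (norm_pd_pd_le_sqrt u i j p)
  linarith [abs_add_le (inner ℝ (pd 0 u p) (pd i (pd 0 u) p))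
    (inner ℝ (pd 1 u p) (pd i (pd 1 u) p)), bound 0, bound 1]

theorem sum_pd_pd_derivSq_one (hu : ContDiff ℝ ∞ u) (p : ℝ × ℝ) :
    ∑ i, pd i (pd i (derivSq 1 u)) p
      = 2 * derivSq 2 u p + 2 * ∑ i, ∑ j, inner ℝ (pd j u p) (pd i (pd i (pd j u)) p) := by
  have hd (j : Fin 2) := contDiff_pd hu j
  have hdd (i j : Fin 2) := contDiff_pd (hd j) i
  have hterm (i : Fin 2) : pd i (pd i (derivSq 1 u)) p = 2 * ∑ j, (‖pd i (pd j u) p‖ ^ 2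
      + inner ℝ (pd j u p) (pd i (pd i (pd j u)) p)) := by
    rw [pd_derivSq_one hu, pd_mul contDiff_const (ContDiff.sum fun j _ => (hd j).inner ℝ (hdd i j)),
      pd_const, zero_mul, add_zero, pd_sum _ fun j => (hd j).inner ℝ (hdd i j)]
    simp only [pd_inner (hd _) (hdd i _), real_inner_self_eq_norm_sq, add_comm]
  simp only [hterm]
  simp only [derivSq, Fin.sum_univ_two]
  ring

theorem two_mul_derivSq_two_sub_le (hu : ContDiff ℝ ∞ u) (p : ℝ × ℝ) :
    2 * derivSq 2 u p - 8 * (√(derivSq 1 u p) * √(derivSq 3 u p))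
      ≤ ∑ i, pd i (pd i (derivSq 1 u)) p := by
  have bound (i j : Fin 2) := neg_le_of_abs_le
    (abs_inner_le_mul (norm_pd_le_sqrt u j p) (norm_pd_pd_pd_le_sqrt u i i j p))
  rw [sum_pd_pd_derivSq_one hu]
  simp only [Fin.sum_univ_two]
  linarith [bound 0 0, bound 0 1, bound 1 0, bound 1 1]

theorem sum_pd_pow_mul_inner (hu : ContDiff ℝ ∞ u) (k : ℕ) (p : ℝ × ℝ) :
    ∑ i, pd i (fun q => derivSq 1 u q ^ (k + 1) * inner ℝ (u q) (pd i u q)) p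
      = derivSq 1 u p ^ (k + 1) * (derivSq 1 u p + ∑ i, inner ℝ (u p) (pd i (pd i u) p))
        + (k + 1) * derivSq 1 u p ^ k * ∑ i, pd i (derivSq 1 u) p * inner ℝ (u p) (pd i u p) := by
  have hP := contDiff_derivSq hu 1
  have hd (i : Fin 2) := contDiff_pd hu i
  simp only [pd_mul (hP.pow (k + 1)) (hu.inner ℝ (hd _)), pd_pow hP, pd_inner hu (hd _),
    Fin.sum_univ_two, real_inner_self_eq_norm_sq]
  simp only [derivSq, Fin.sum_univ_two]
  ring

variable {e : ℝ} {p : ℝ × ℝ}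

theorem le_sum_pd_pow_mul_inner (hu : ContDiff ℝ ∞ u) (k : ℕ) (hue : ‖u p‖ ≤ e) :
    3 / 4 * derivSq 1 u p ^ (k + 2)
        - (10 + 8 * k) ^ 2 * e ^ 2 * (derivSq 1 u p ^ k * derivSq 2 u p)
      ≤ ∑ i, pd i (fun q => derivSq 1 u q ^ (k + 1) * inner ℝ (u q) (pd i u q)) p := by
  rw [sum_pd_pow_mul_inner hu]
  set P := derivSq 1 u p
  set r := √P
  set m := √(derivSq 2 u p)
  have hr : r ^ 2 = P := Real.sq_sqrt (derivSq_nonneg 1 u p)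
  have hm : m ^ 2 = derivSq 2 u p := Real.sq_sqrt (derivSq_nonneg 2 u p)
  have hP : 0 ≤ P := derivSq_nonneg 1 u p
  have hlap : -(2 * (e * m)) ≤ ∑ i, inner ℝ (u p) (pd i (pd i u) p) := by
    have bound (i : Fin 2) :=
      neg_le_of_abs_le (abs_inner_le_mul hue (norm_pd_pd_le_sqrt u i i p))
    rw [Fin.sum_univ_two]
    linarith [bound 0, bound 1]
  have hgrad : -(8 * (e * P * m)) ≤ ∑ i, pd i (derivSq 1 u) p * inner ℝ (u p) (pd i u p) := by
    have bound (i : Fin 2) :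
        -(4 * (e * P * m)) ≤ pd i (derivSq 1 u) p * inner ℝ (u p) (pd i u p) := by
      refine neg_le_of_abs_le ((abs_mul _ _).trans_le ((mul_le_mul (abs_pd_derivSq_one_le hu i p)
        (abs_inner_le_mul hue (norm_pd_le_sqrt u i p)) (abs_nonneg _) (by positivity)).trans_eq ?_))
      rw [← hr]
      ring
    rw [Fin.sum_univ_two]
    linarith [bound 0, bound 1]
  have hyoung : (10 + 8 * k) * (e * P * m)
      ≤ 1 / 4 * P ^ 2 + (10 + 8 * k) ^ 2 * e ^ 2 * derivSq 2 u p := by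
    rw [← hm]
    nlinarith [sq_nonneg (1 / 2 * P - (10 + 8 * k) * e * m)]
  calc 3 / 4 * P ^ (k + 2) - (10 + 8 * k) ^ 2 * e ^ 2 * (P ^ k * derivSq 2 u p)
      = P ^ k * (P ^ 2 - (1 / 4 * P ^ 2 + (10 + 8 * k) ^ 2 * e ^ 2 * derivSq 2 u p)) := by ring
    _ ≤ P ^ k * (P ^ 2 - (10 + 8 * k) * (e * P * m)) := by gcongr
    _ = P ^ (k + 1) * (P + -(2 * (e * m))) + (k + 1) * P ^ k * -(8 * (e * P * m)) := by ring
    _ ≤ _ := by gcongr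

theorem pow_mul_inner_sq_le (k : ℕ) (hue : ‖u p‖ ≤ e) (i : Fin 2) :
    (derivSq 1 u p ^ (k + 1) * inner ℝ (u p) (pd i u p)) ^ 2
      ≤ 1 / 4 * derivSq 1 u p ^ (k + 2) * (4 * e ^ 2 * derivSq 1 u p ^ (k + 1)) := by
  have hinner : inner ℝ (u p) (pd i u p) ^ 2 ≤ e ^ 2 * derivSq 1 u p := by
    calc inner ℝ (u p) (pd i u p) ^ 2 ≤ (e * √(derivSq 1 u p)) ^ 2 :=
          sq_le_sq' (neg_le_of_abs_le (abs_inner_le_mul hue (norm_pd_le_sqrt u i p)))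
            (le_of_abs_le (abs_inner_le_mul hue (norm_pd_le_sqrt u i p)))
      _ = e ^ 2 * derivSq 1 u p := by rw [mul_pow, Real.sq_sqrt (derivSq_nonneg 1 u p)]
  calc (derivSq 1 u p ^ (k + 1) * inner ℝ (u p) (pd i u p)) ^ 2
      = (derivSq 1 u p ^ (k + 1)) ^ 2 * inner ℝ (u p) (pd i u p) ^ 2 := by ring
    _ ≤ (derivSq 1 u p ^ (k + 1)) ^ 2 * (e ^ 2 * derivSq 1 u p) := by gcongr
    _ = _ := by ring

variable {a b : ℝ} {w : ℝ → ℝ}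

theorem wInt_derivSq_one_pow_le (hab : a ≤ b) (hw : IsCutoff a b w) (k : ℕ)
    (hu : ContDiff ℝ ∞ u) (hper : Function.Periodic u (0, 1))
    (hue : ∀ p : ℝ × ℝ, p.1 ∈ Icc a b → ‖u p‖ ≤ e) :
    wInt a b w (fun p => derivSq 1 u p ^ (k + 2))
      ≤ 2 * (10 + 8 * k) ^ 2 * e ^ 2 * wInt a b w (fun p => derivSq 1 u p ^ k * derivSq 2 u p)
        + 8 * e ^ 2 * wInt a b (deriv w) (fun p => derivSq 1 u p ^ (k + 1)) := by
  have hP := contDiff_derivSq hu 1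
  have hP₀ := derivSq_nonneg 1 u
  have hPc := hP.continuous
  have hMc := continuous_derivSq hu 2
  have key := wInt_le_of_le_divergence hab hw
    (F := fun i q => derivSq 1 u q ^ (k + 1) * inner ℝ (u q) (pd i u q))
    (A := fun p => 1 / 2 * derivSq 1 u p ^ (k + 2))
    (B := fun p => (10 + 8 * k) ^ 2 * e ^ 2 * (derivSq 1 u p ^ k * derivSq 2 u p))
    (C := fun p => 1 / 4 * derivSq 1 u p ^ (k + 2))
    (D := fun p => 4 * e ^ 2 * derivSq 1 u p ^ (k + 1))
    (fun i => (hP.pow _).mul (hu.inner ℝ (contDiff_pd hu i)))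
    (fun p => by simp [hper p, periodic_pd hper 1 p, periodic_derivSq hper 1 p])
    (by fun_prop) (by fun_prop) (by fun_prop)
    (fun p => mul_nonneg (by norm_num) (pow_nonneg (hP₀ p) _))
    (fun p => mul_nonneg (by positivity) (pow_nonneg (hP₀ p) _))
    (fun p hp => pow_mul_inner_sq_le k (hue p hp) 0)
    (fun p hp => by linarith [le_sum_pd_pow_mul_inner hu k (hue p hp)])
  rw [wInt_const_mul, wInt_const_mul, wInt_const_mul] at key
  linarith

theorem eight_mul_cube_mul_le {μ : ℝ} (hμ : 0 < μ) (r n : ℝ) :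
    8 * (r ^ 3 * n) ≤ 2 * μ⁻¹ * (r ^ 2) ^ 3 + 8 * μ * n ^ 2 := by
  have hsq : 0 ≤ 2 * μ⁻¹ * (r ^ 3 - 2 * μ * n) ^ 2 := by positivity
  have hexpand : 2 * μ⁻¹ * (r ^ 3 - 2 * μ * n) ^ 2
      = 2 * μ⁻¹ * (r ^ 2) ^ 3 + 8 * μ * n ^ 2 - 8 * (r ^ 3 * n) := by
    field_simp
    ring
  linarith

theorem le_sum_pd_mul_pd_derivSq_one (hu : ContDiff ℝ ∞ u) {μ : ℝ} (hμ : 0 < μ) (p : ℝ × ℝ) :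
    2 * (derivSq 1 u p * derivSq 2 u p)
      ≤ ∑ i, pd i (fun q => derivSq 1 u q * pd i (derivSq 1 u) q) p
        + (2 * μ⁻¹ * derivSq 1 u p ^ 3 + 8 * μ * derivSq 3 u p) := by
  have hP := contDiff_derivSq hu 1
  have hlap := mul_le_mul_of_nonneg_left (two_mul_derivSq_two_sub_le hu p) (derivSq_nonneg 1 u p)
  have hgrad : 0 ≤ ∑ i, pd i (derivSq 1 u) p * pd i (derivSq 1 u) p :=
    Finset.sum_nonneg fun i _ => mul_self_nonneg _
  have hyoung := eight_mul_cube_mul_le hμ √(derivSq 1 u p) √(derivSq 3 u p)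
  rw [pow_succ √(derivSq 1 u p) 2, Real.sq_sqrt (derivSq_nonneg 1 u p),
    Real.sq_sqrt (derivSq_nonneg 3 u p)] at hyoung
  simp only [pd_mul hP (contDiff_pd hP _), Finset.sum_add_distrib, ← Finset.mul_sum]
  linarith

theorem mul_pd_derivSq_one_sq_le (hu : ContDiff ℝ ∞ u) (i : Fin 2) (p : ℝ × ℝ) :
    (derivSq 1 u p * pd i (derivSq 1 u) p) ^ 2
      ≤ derivSq 1 u p * derivSq 2 u p * (16 * derivSq 1 u p ^ 2) := by
  have hpd := abs_pd_derivSq_one_le hu i p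
  calc (derivSq 1 u p * pd i (derivSq 1 u) p) ^ 2
      = derivSq 1 u p ^ 2 * |pd i (derivSq 1 u) p| ^ 2 := by rw [mul_pow, sq_abs]
    _ ≤ derivSq 1 u p ^ 2 * (4 * (√(derivSq 1 u p) * √(derivSq 2 u p))) ^ 2 := by gcongr
    _ = derivSq 1 u p * derivSq 2 u p * (16 * derivSq 1 u p ^ 2) := by
      rw [mul_pow, mul_pow, Real.sq_sqrt (derivSq_nonneg 1 u p),
        Real.sq_sqrt (derivSq_nonneg 2 u p)]
      ring

theorem wInt_derivSq_one_mul_derivSq_two_le (hab : a ≤ b) (hw : IsCutoff a b w) {μ : ℝ}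
    (hμ : 0 < μ) (hu : ContDiff ℝ ∞ u) (hper : Function.Periodic u (0, 1)) :
    wInt a b w (fun p => derivSq 1 u p * derivSq 2 u p)
      ≤ 2 * μ⁻¹ * wInt a b w (fun p => derivSq 1 u p ^ 3) + 8 * μ * wInt a b w (derivSq 3 u)
        + 16 * wInt a b (deriv w) (fun p => derivSq 1 u p ^ 2) := by
  have hP := contDiff_derivSq hu 1
  have hPper := periodic_derivSq hper 1
  have hPc := hP.continuous
  have hMc := continuous_derivSq hu 2
  have hNc := continuous_derivSq hu 3
  have key := wInt_le_of_le_divergence hab hw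
    (F := fun i q => derivSq 1 u q * pd i (derivSq 1 u) q)
    (C := fun p => derivSq 1 u p * derivSq 2 u p) (D := fun p => 16 * derivSq 1 u p ^ 2)
    (fun i => hP.mul (contDiff_pd hP i)) (fun p => by simp [hPper p, periodic_pd hPper 1 p])
    (by fun_prop) (by fun_prop) (by fun_prop)
    (fun p => mul_nonneg (derivSq_nonneg 1 u p) (derivSq_nonneg 2 u p)) (fun p => by positivity)
    (fun p _ => mul_pd_derivSq_one_sq_le hu 0 p)
    (fun p _ => (two_mul _).symm.trans_le (le_sum_pd_mul_pd_derivSq_one hu hμ p))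
  rwa [wInt_add hw.continuous (by fun_prop) (by fun_prop), wInt_const_mul, wInt_const_mul,
    wInt_const_mul] at key

end GagliardoNirenberg

/-! ### Higher order estimates for the quasilinear system -/

section CoefficientCommutators

variable {E : Type*} [NormedAddCommGroup E] [NormedSpace ℝ E] {A : ℝ × ℝ → E →L[ℝ] E}
  {h : ℝ × ℝ → E}

theorem cauchyRiemann_pd (hA : ContDiff ℝ ∞ A) (hh : ContDiff ℝ ∞ h) (i : Fin 2) :
    cauchyRiemann A (pd i h) = fun p => pd i (cauchyRiemann A h) p - pd i A p (pd 1 h p) := by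
  funext p
  have hd (j : Fin 2) := contDiff_pd hh j
  have hpd : pd i (cauchyRiemann A h) p
      = pd i (pd 0 h) p + (A p (pd i (pd 1 h) p) + pd i A p (pd 1 h p)) :=
    (pd_add (hd 0) (hA.clm_apply (hd 1)) i p).trans (by rw [pd_clm_apply hA (hd 1)])
  rw [hpd, pd_comm hh i 0, pd_comm hh i 1, cauchyRiemann]
  abel

theorem cauchyRiemann_pd_pd (hA : ContDiff ℝ ∞ A) (hh : ContDiff ℝ ∞ h) (i j : Fin 2)
    (p : ℝ × ℝ) :
    cauchyRiemann A (pd i (pd j h)) p = pd i (pd j (cauchyRiemann A h)) p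
      - (pd i A p (pd 1 (pd j h) p) + pd j A p (pd i (pd 1 h) p)
        + pd i (pd j A) p (pd 1 h p)) := by
  have hAj := contDiff_pd hA j
  have ht := contDiff_pd hh 1
  have hj : pd j (cauchyRiemann A h)
      = fun q => cauchyRiemann A (pd j h) q + pd j A q (pd 1 h q) := by
    simp only [cauchyRiemann_pd hA hh, sub_add_cancel]
  rw [hj, pd_add (contDiff_cauchyRiemann hA (contDiff_pd hh j)) (hAj.clm_apply ht),
    pd_clm_apply hAj ht, cauchyRiemann_pd hA (contDiff_pd hh j)]
  beta_reduce
  abel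

end CoefficientCommutators

section QuasilinearEstimates

variable {E : Type*} [NormedAddCommGroup E] [InnerProductSpace ℝ E]

/-- The standing assumptions on a map `u` bounded by `e` and a coefficient `A` on `[a, b] × I`
(eventually `A = J ∘ u`): `A` is `κ`-close to the constant `J₀`, its derivatives obey the bounds
the chain rule would give with constant `L`, and both `κ` and `L * e` are small. -/
structure IsSmallSystem (a b e L κ : ℝ) (J₀ : E →L[ℝ] E) (A : ℝ × ℝ → E →L[ℝ] E)
    (u : ℝ × ℝ → E) : Prop where
  le : a ≤ b
  isSkewIsometry : IsSkewIsometry J₀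
  contDiff_map : ContDiff ℝ ∞ u
  periodic_map : Function.Periodic u (0, 1)
  contDiff_coeff : ContDiff ℝ ∞ A
  norm_map_le : ∀ p : ℝ × ℝ, p.1 ∈ Icc a b → ‖u p‖ ≤ e
  norm_coeff_sub_le : ∀ p : ℝ × ℝ, p.1 ∈ Icc a b → ‖A p - J₀‖ ≤ κ
  norm_pd_coeff_le : ∀ (i : Fin 2) (p : ℝ × ℝ), p.1 ∈ Icc a b →
    ‖pd i A p‖ ≤ L * √(derivSq 1 u p)
  norm_pd_pd_coeff_le : ∀ (i j : Fin 2) (p : ℝ × ℝ), p.1 ∈ Icc a b →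
    ‖pd i (pd j A) p‖ ≤ L * (derivSq 1 u p + √(derivSq 2 u p))
  lipschitz_nonneg : 0 ≤ L
  bound_pos : 0 < e
  bound_le_one : e ≤ 1
  four_mul_le_one : 4 * κ ≤ 1
  mul_bound_le_one : 200000 * (L * e) ≤ 1

variable {a b e L κ : ℝ} {J₀ : E →L[ℝ] E} {A : ℝ × ℝ → E →L[ℝ] E} {u : ℝ × ℝ → E}
  {w : ℝ → ℝ}

namespace IsSmallSystem

theorem sq_mul_sq_le_one (hS : IsSmallSystem a b e L κ J₀ A u) :
    40000000000 * (L ^ 2 * e ^ 2) ≤ 1 := by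
  have := mul_nonneg hS.lipschitz_nonneg hS.bound_pos.le
  nlinarith [hS.mul_bound_le_one]

theorem contDiff_cauchyRiemann (hS : IsSmallSystem a b e L κ J₀ A u) :
    ContDiff ℝ ∞ (cauchyRiemann A u) :=
  _root_.contDiff_cauchyRiemann hS.contDiff_coeff hS.contDiff_map

theorem wInt_derivSq_one_le (hS : IsSmallSystem a b e L κ J₀ A u) (hw : IsCutoff a b w)
    {h : ℝ × ℝ → E} (hh : ContDiff ℝ ∞ h) (hper : Function.Periodic h (0, 1)) :
    wInt a b w (derivSq 1 h) ≤ 16 * wInt a b w (derivSq 0 (cauchyRiemann A h))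
      + 12 * wInt a b (deriv w) (derivSq 0 h) :=
  _root_.wInt_derivSq_one_le hS.isSkewIsometry hS.le hw hS.contDiff_coeff hS.four_mul_le_one
    hS.norm_coeff_sub_le hh hper

theorem derivSq_zero_cauchyRiemann_pd_le (hS : IsSmallSystem a b e L κ J₀ A u) (i : Fin 2)
    {p : ℝ × ℝ} (hp : p.1 ∈ Icc a b) :
    derivSq 0 (cauchyRiemann A (pd i u)) p
      ≤ 2 * derivSq 0 (pd i (cauchyRiemann A u)) p + 2 * L ^ 2 * derivSq 1 u p ^ 2 := by
  have hcomm : ‖pd i A p (pd 1 u p)‖ ≤ L * derivSq 1 u p :=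
    calc ‖pd i A p (pd 1 u p)‖ ≤ L * √(derivSq 1 u p) * √(derivSq 1 u p) :=
          (pd i A p).le_of_opNorm_le_of_le (hS.norm_pd_coeff_le i p hp) (norm_pd_le_sqrt u 1 p)
      _ = L * derivSq 1 u p := by rw [mul_assoc, Real.mul_self_sqrt (derivSq_nonneg 1 u p)]
  have hsq : ‖pd i A p (pd 1 u p)‖ ^ 2 ≤ L ^ 2 * derivSq 1 u p ^ 2 := by
    rw [← mul_pow]
    gcongr
  have := norm_sub_sq_le_two_mul (pd i (cauchyRiemann A u) p) (pd i A p (pd 1 u p))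
  simp only [cauchyRiemann_pd hS.contDiff_coeff hS.contDiff_map, derivSq_zero]
  linarith

theorem norm_commutator_pd_pd_le (hS : IsSmallSystem a b e L κ J₀ A u) (i j : Fin 2)
    {p : ℝ × ℝ} (hp : p.1 ∈ Icc a b) :
    ‖pd i A p (pd 1 (pd j u) p) + pd j A p (pd i (pd 1 u) p) + pd i (pd j A) p (pd 1 u p)‖
      ≤ 3 * L * (√(derivSq 1 u p) * √(derivSq 2 u p)) + L * (derivSq 1 u p * √(derivSq 1 u p)) := by
  have h₁ := (pd i A p).le_of_opNorm_le_of_le (hS.norm_pd_coeff_le i p hp)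
    (norm_pd_pd_le_sqrt u 1 j p)
  have h₂ := (pd j A p).le_of_opNorm_le_of_le (hS.norm_pd_coeff_le j p hp)
    (norm_pd_pd_le_sqrt u i 1 p)
  have h₃ := (pd i (pd j A) p).le_of_opNorm_le_of_le (hS.norm_pd_pd_coeff_le i j p hp)
    (norm_pd_le_sqrt u 1 p)
  refine norm_add₃_le.trans ?_
  linarith

theorem derivSq_zero_cauchyRiemann_pd_pd_le (hS : IsSmallSystem a b e L κ J₀ A u) (i j : Fin 2)
    {p : ℝ × ℝ} (hp : p.1 ∈ Icc a b) :
    derivSq 0 (cauchyRiemann A (pd i (pd j u))) p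
      ≤ 2 * derivSq 0 (pd i (pd j (cauchyRiemann A u))) p
        + (36 * L ^ 2 * (derivSq 1 u p * derivSq 2 u p) + 4 * L ^ 2 * derivSq 1 u p ^ 3) := by
  have hcomm := pow_le_pow_left₀ (norm_nonneg _) (hS.norm_commutator_pd_pd_le i j hp) 2
  have hr := Real.sq_sqrt (derivSq_nonneg 1 u p)
  have hm := Real.sq_sqrt (derivSq_nonneg 2 u p)
  have hsum := norm_sub_sq_le_two_mul (pd i (pd j (cauchyRiemann A u)) p)
    (pd i A p (pd 1 (pd j u) p) + pd j A p (pd i (pd 1 u) p) + pd i (pd j A) p (pd 1 u p))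
  rw [← cauchyRiemann_pd_pd hS.contDiff_coeff hS.contDiff_map] at hsum
  have hyoung : (3 * L * (√(derivSq 1 u p) * √(derivSq 2 u p))
        + L * (derivSq 1 u p * √(derivSq 1 u p))) ^ 2
      ≤ 18 * L ^ 2 * (derivSq 1 u p * derivSq 2 u p) + 2 * L ^ 2 * derivSq 1 u p ^ 3 := by
    have scalar (r m : ℝ) : (3 * L * (r * m) + L * (r ^ 2 * r)) ^ 2
        ≤ 18 * L ^ 2 * (r ^ 2 * m ^ 2) + 2 * L ^ 2 * (r ^ 2) ^ 3 := by
      nlinarith [sq_nonneg (3 * L * (r * m) - L * (r ^ 2 * r))]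
    simpa only [hr, hm] using scalar √(derivSq 1 u p) √(derivSq 2 u p)
  simp only [derivSq_zero]
  linarith

theorem wInt_derivSq_two_le (hS : IsSmallSystem a b e L κ J₀ A u) (hw : IsCutoff a b w) :
    wInt a b w (derivSq 2 u) ≤ 64 * wInt a b w (derivSq 1 (cauchyRiemann A u))
      + 25 * wInt a b (deriv w) (derivSq 1 u) := by
  have hu := hS.contDiff_map
  have hPc := continuous_derivSq hu 1
  have hlin (i : Fin 2) : wInt a b w (derivSq 1 (pd i u))
      ≤ 16 * (2 * wInt a b w (derivSq 0 (pd i (cauchyRiemann A u)))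
          + 2 * L ^ 2 * wInt a b w (fun p => derivSq 1 u p ^ 2))
        + 12 * wInt a b (deriv w) (derivSq 0 (pd i u)) := by
    have hd := contDiff_pd hu i
    have hc := continuous_derivSq (contDiff_pd hS.contDiff_cauchyRiemann i) 0
    have hcomm := wInt_mono hw.continuous
      (continuous_derivSq (_root_.contDiff_cauchyRiemann hS.contDiff_coeff hd) 0) (by fun_prop)
      fun p hp => hS.derivSq_zero_cauchyRiemann_pd_le i hp
    rw [wInt_add hw.continuous (by fun_prop) (by fun_prop), wInt_const_mul, wInt_const_mul]
      at hcomm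
    linarith [hS.wInt_derivSq_one_le hw hd (periodic_pd hS.periodic_map i)]
  have hinterp := wInt_derivSq_one_pow_le hS.le hw 0 hu hS.periodic_map hS.norm_map_le
  simp only [pow_zero, one_mul, zero_add, pow_one, Nat.cast_zero, mul_zero, add_zero] at hinterp
  have hM : 0 ≤ wInt a b w (derivSq 2 u) := wInt_nonneg (derivSq_nonneg 2 u)
  have hP' : 0 ≤ wInt a b (deriv w) (derivSq 1 u) := wInt_nonneg (derivSq_nonneg 1 u)
  have hlinsum := add_le_add (hlin 0) (hlin 1)
  have hsplit {v : ℝ → ℝ} (hv : Continuous v) (j : ℕ) {f : ℝ × ℝ → E} (hf : ContDiff ℝ ∞ f) :=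
    (wInt_derivSq_succ (a := a) (b := b) hv hf j).trans (Fin.sum_univ_two _)
  have hsplitM := hsplit hw.continuous 1 hu
  have hsplitP := hsplit hw.continuous_deriv 0 hu
  have hsplitCR := hsplit hw.continuous 0 hS.contDiff_cauchyRiemann
  have habsorb := mul_le_mul_of_nonneg_left hinterp (sq_nonneg L)
  have hsmallM := mul_le_mul_of_nonneg_right hS.sq_mul_sq_le_one hM
  have hsmallP := mul_le_mul_of_nonneg_right hS.sq_mul_sq_le_one hP'
  nlinarith

end IsSmallSystem

/-- Absorption step of the third order estimate; `N`, `M'`, `P''` are the integrals of `derivSq 3`,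
`derivSq 2`, `derivSq 1` against `w`, `w'`, `w''`, and `X`, `Y`, `Z` are the interpolation terms. -/
theorem third_order_absorb {L e N D M' P'' X Y Z : ℝ} (he : 0 < e) (he₁ : e ≤ 1)
    (hLe : 40000000000 * (L ^ 2 * e ^ 2) ≤ 1) (hN : 0 ≤ N) (hM' : 0 ≤ M') (hP'' : 0 ≤ P'')
    (hZ : 0 ≤ Z)
    (hlin : N ≤ 32 * D + 2304 * L ^ 2 * X + 256 * L ^ 2 * Y + 12 * M')
    (hY : Y ≤ 648 * e ^ 2 * X + 8 * e ^ 2 * Z)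
    (hX : X ≤ 2 * (2592 * e ^ 2)⁻¹ * Y + 8 * (2592 * e ^ 2) * N + 16 * Z)
    (hZ' : Z ≤ 200 * e ^ 2 * M' + 8 * e ^ 2 * P'') :
    N ≤ 64 * D + 25 * M' + P'' := by
  have hX' : X ≤ 41472 * e ^ 2 * N + 34 * Z := by
    have h : 2 * (2592 * e ^ 2)⁻¹ * Y ≤ 1 / 2 * X + 1 / 162 * Z :=
      calc 2 * (2592 * e ^ 2)⁻¹ * Y
          ≤ 2 * (2592 * e ^ 2)⁻¹ * (648 * e ^ 2 * X + 8 * e ^ 2 * Z) := by gcongr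
        _ = 1 / 2 * X + 1 / 162 * Z := by field_simp; ring
    linarith
  set x := L ^ 2 * e ^ 2
  have hx₀ : 0 ≤ x := by positivity
  have he_sq : e ^ 2 ≤ 1 := pow_le_one₀ he.le he₁
  have hLZ : L ^ 2 * Z ≤ 200 * (x * M') + 8 * (x * P'') := by
    nlinarith [mul_le_mul_of_nonneg_left hZ' (sq_nonneg L)]
  have hLX : L ^ 2 * X ≤ 41472 * (x * N) + 34 * (L ^ 2 * Z) := by
    nlinarith [mul_le_mul_of_nonneg_left hX' (sq_nonneg L)]
  have hxZ : x * Z ≤ L ^ 2 * Z := by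
    gcongr
    exact mul_le_of_le_one_right (sq_nonneg L) he_sq
  have hLY : L ^ 2 * Y ≤ 648 * (41472 * (x * N) + 34 * (x * Z)) + 8 * (x * Z) := by
    have hxX : x * X ≤ 41472 * (x * N) + 34 * (x * Z) := by
      nlinarith [mul_le_mul_of_nonneg_left hX' hx₀,
        mul_le_mul_of_nonneg_right he_sq (mul_nonneg hx₀ hN)]
    nlinarith [mul_le_mul_of_nonneg_left hY (sq_nonneg L)]
  have hsmall {y : ℝ} (hy : 0 ≤ y) := mul_le_mul_of_nonneg_right hLe hy
  nlinarith [hsmall hN, hsmall hM', hsmall hP'']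

namespace IsSmallSystem

theorem wInt_derivSq_one_pd_pd_le (hS : IsSmallSystem a b e L κ J₀ A u) (hw : IsCutoff a b w)
    (i j : Fin 2) :
    wInt a b w (derivSq 1 (pd i (pd j u)))
      ≤ 16 * (2 * wInt a b w (derivSq 0 (pd i (pd j (cauchyRiemann A u))))
          + (36 * L ^ 2 * wInt a b w (fun p => derivSq 1 u p * derivSq 2 u p)
            + 4 * L ^ 2 * wInt a b w (fun p => derivSq 1 u p ^ 3)))
        + 12 * wInt a b (deriv w) (derivSq 0 (pd i (pd j u))) := by
  have hu := hS.contDiff_map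
  have hd := contDiff_pd (contDiff_pd hu j) i
  have hwc := hw.continuous
  have hPc := continuous_derivSq hu 1
  have hMc := continuous_derivSq hu 2
  have hc := continuous_derivSq (contDiff_pd (contDiff_pd hS.contDiff_cauchyRiemann j) i) 0
  have hcomm := wInt_mono hwc
    (continuous_derivSq (_root_.contDiff_cauchyRiemann hS.contDiff_coeff hd) 0) (by fun_prop)
    fun p hp => hS.derivSq_zero_cauchyRiemann_pd_pd_le i j hp
  rw [wInt_add hwc (by fun_prop) (by fun_prop), wInt_add hwc (by fun_prop) (by fun_prop),
    wInt_const_mul, wInt_const_mul, wInt_const_mul] at hcomm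
  linarith [hS.wInt_derivSq_one_le hw hd (periodic_pd (periodic_pd hS.periodic_map j) i)]

theorem wInt_derivSq_three_le (hS : IsSmallSystem a b e L κ J₀ A u) (hw : IsCutoff a b w)
    (hw' : IsCutoff a b (deriv w)) :
    wInt a b w (derivSq 3 u) ≤ 64 * wInt a b w (derivSq 2 (cauchyRiemann A u))
      + 25 * wInt a b (deriv w) (derivSq 2 u) + wInt a b (deriv (deriv w)) (derivSq 1 u) := by
  have hu := hS.contDiff_map
  have hlin (i j : Fin 2) := hS.wInt_derivSq_one_pd_pd_le hw i j
  have hsplit {v : ℝ → ℝ} (hv : Continuous v) (k : ℕ) {f : ℝ × ℝ → E} (hf : ContDiff ℝ ∞ f) :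
      wInt a b v (derivSq (k + 2) f) = ∑ j, ∑ i, wInt a b v (derivSq k (pd i (pd j f))) := by
    simp only [wInt_derivSq_succ hv hf, wInt_derivSq_succ hv (contDiff_pd hf _)]
  have hsplitN := hsplit hw.continuous 1 hu
  have hsplitM := hsplit hw.continuous_deriv 0 hu
  have hsplitCR := hsplit hw.continuous 0 hS.contDiff_cauchyRiemann
  have hY := wInt_derivSq_one_pow_le hS.le hw 1 hu hS.periodic_map hS.norm_map_le
  have hZ := wInt_derivSq_one_pow_le hS.le hw' 0 hu hS.periodic_map hS.norm_map_le
  have hX := wInt_derivSq_one_mul_derivSq_two_le hS.le hw (μ := 2592 * e ^ 2)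
    (by have := hS.bound_pos; positivity) hu hS.periodic_map
  simp only [Fin.sum_univ_two] at hsplitN hsplitM hsplitCR
  norm_num at hY hZ hsplitN
  refine third_order_absorb hS.bound_pos hS.bound_le_one hS.sq_mul_sq_le_one
    (wInt_nonneg (derivSq_nonneg 3 u)) (wInt_nonneg (derivSq_nonneg 2 u))
    (wInt_nonneg (derivSq_nonneg 1 u)) (wInt_nonneg fun p => sq_nonneg _) ?_ hY hX hZ
  linarith [hlin 0 0, hlin 0 1, hlin 1 0, hlin 1 1]

end IsSmallSystem

end QuasilinearEstimates

/-! ### Fourier modes and the exponentially weighted estimate of order zero -/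

section WeightedODE

variable {E : Type*} [NormedAddCommGroup E] [InnerProductSpace ℝ E] {a b κ l : ℝ} {y g : ℝ → E}

theorem mul_norm_sq_le_of_le_mul {κ σ r : ℝ} (hκ : 0 < κ) (hσ : |σ| ≤ 1) (h : κ ≤ σ * r)
    (x z : E) :
    κ * ‖x‖ ^ 2 ≤ σ * (2 * (r * ‖x‖ ^ 2 + inner ℝ x z)) + κ⁻¹ * ‖z‖ ^ 2 := by
  have hinner : -(‖x‖ * ‖z‖) ≤ σ * inner ℝ x z := by
    refine (neg_le_neg ?_).trans (neg_abs_le _)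
    rw [abs_mul]
    exact (mul_le_of_le_one_left (abs_nonneg _) hσ).trans (abs_real_inner_le_norm x z)
  have hyoung : 0 ≤ κ * ‖x‖ ^ 2 - 2 * (‖x‖ * ‖z‖) + κ⁻¹ * ‖z‖ ^ 2 := by
    have : κ * ‖x‖ ^ 2 - 2 * (‖x‖ * ‖z‖) + κ⁻¹ * ‖z‖ ^ 2 = κ⁻¹ * (κ * ‖x‖ - ‖z‖) ^ 2 := by
      field_simp
      ring
    rw [this]
    positivity
  linarith [mul_le_mul_of_nonneg_right h (sq_nonneg ‖x‖)]

theorem integral_weighted_norm_sq_le_of_ode {μ σ : ℝ} {v : ℝ → ℝ} (hab : a ≤ b)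
    (hy : ∀ s, HasDerivAt y (l • y s + g s) s) (hg : Continuous g)
    (hv : ∀ s, HasDerivAt v (μ * v s) s) (hκ : 0 < κ) (hσ : |σ| ≤ 1) (h : κ ≤ σ * (l + μ)) :
    κ * ∫ s in a..b, v s ^ 2 * ‖y s‖ ^ 2
      ≤ σ * (v b ^ 2 * ‖y b‖ ^ 2 - v a ^ 2 * ‖y a‖ ^ 2)
        + κ⁻¹ * ∫ s in a..b, v s ^ 2 * ‖g s‖ ^ 2 := by
  have hyc : Continuous y := continuous_iff_continuousAt.2 fun s => (hy s).continuousAt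
  have hvc : Continuous v := continuous_iff_continuousAt.2 fun s => (hv s).continuousAt
  have henergy (s : ℝ) : HasDerivAt (fun s => v s ^ 2 * ‖y s‖ ^ 2)
      (v s ^ 2 * (2 * ((l + μ) * ‖y s‖ ^ 2 + inner ℝ (y s) (g s)))) s := by
    refine (((hv s).fun_pow 2).mul (hy s).norm_sq).congr_deriv ?_
    rw [inner_add_right, real_inner_smul_right, real_inner_self_eq_norm_sq]
    push_cast
    ring
  have hintegrable {f : ℝ → ℝ} (hf : Continuous f) : IntervalIntegrable f volume a b :=
    hf.intervalIntegrable a b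
  rw [← intervalIntegral.integral_eq_sub_of_hasDerivAt (fun s _ => henergy s)
      (hintegrable (by fun_prop)), ← intervalIntegral.integral_const_mul,
    ← intervalIntegral.integral_const_mul, ← intervalIntegral.integral_const_mul,
    ← intervalIntegral.integral_add (hintegrable (by fun_prop)) (hintegrable (by fun_prop))]
  refine intervalIntegral.integral_mono_on hab (hintegrable (by fun_prop))
    (hintegrable (by fun_prop))
    fun s _ => ?_
  linarith [mul_le_mul_of_nonneg_left (mul_norm_sq_le_of_le_mul hκ hσ h (y s) (g s))
    (sq_nonneg (v s))]

/-- The weight `e^{δ(ρ - |s|)}` whose square appears in `hatNorm`. -/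
def neckWeight (δ ρ s : ℝ) : ℝ :=
  exp (δ * (ρ - |s|))

theorem continuous_neckWeight (δ ρ : ℝ) : Continuous (neckWeight δ ρ) := by
  unfold neckWeight
  fun_prop

theorem neckWeight_pos (δ ρ s : ℝ) : 0 < neckWeight δ ρ s :=
  exp_pos _

theorem neckWeight_sq (δ ρ s : ℝ) : neckWeight δ ρ s ^ 2 = exp (2 * δ * (ρ - |s|)) := by
  rw [neckWeight, ← exp_nat_mul]
  ring_nf

theorem hasDerivAt_exp_mul_add_mul (δ c σ s : ℝ) :
    HasDerivAt (fun s => exp (δ * (c + σ * s))) (δ * σ * exp (δ * (c + σ * s))) s := by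
  refine ((((hasDerivAt_id s).const_mul σ).const_add c).const_mul δ).exp.congr_deriv ?_
  simp only [id_eq]
  ring

theorem integral_neckWeight_sq_mul {δ ρ : ℝ} (ha : a ≤ 0) (hb : 0 ≤ b) {f : ℝ → ℝ}
    (hf : Continuous f) :
    ∫ s in a..b, neckWeight δ ρ s ^ 2 * f s
      = (∫ s in a..0, exp (δ * (ρ + 1 * s)) ^ 2 * f s)
        + ∫ s in (0 : ℝ)..b, exp (δ * (ρ + (-1) * s)) ^ 2 * f s := by
  have hw := continuous_neckWeight δ ρ
  rw [← intervalIntegral.integral_add_adjacent_intervals (b := 0)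
    (Continuous.intervalIntegrable (by fun_prop) _ _)
    (Continuous.intervalIntegrable (by fun_prop) _ _)]
  congr 1
  · refine intervalIntegral.integral_congr fun s hs => ?_
    rw [uIcc_of_le ha] at hs
    simp only [neckWeight, abs_of_nonpos hs.2, sub_neg_eq_add, one_mul]
  · refine intervalIntegral.integral_congr fun s hs => ?_
    rw [uIcc_of_le hb] at hs
    simp only [neckWeight, abs_of_nonneg hs.1, neg_one_mul, sub_eq_add_neg]

theorem sq_mul_integral_neckWeight_le_of_ode {δ ρ : ℝ} (ha : a ≤ 0) (hb : 0 ≤ b)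
    (hy : ∀ s, HasDerivAt y (l • y s + g s) s) (hg : Continuous g) (hκ : 0 < κ)
    (hya : y a = 0) (hyb : y b = 0)
    (h : κ + |δ| ≤ |l| ∨ l = 0 ∧ κ ≤ δ ∧ y 0 = 0) :
    κ ^ 2 * ∫ s in a..b, neckWeight δ ρ s ^ 2 * ‖y s‖ ^ 2
      ≤ ∫ s in a..b, neckWeight δ ρ s ^ 2 * ‖g s‖ ^ 2 := by
  have hyc : Continuous y := continuous_iff_continuousAt.2 fun s => (hy s).continuousAt
  have hleft {σ : ℝ} (hσ : |σ| ≤ 1) (h : κ ≤ σ * (l + δ * 1)) :=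
    integral_weighted_norm_sq_le_of_ode ha hy hg (hasDerivAt_exp_mul_add_mul δ ρ 1) hκ hσ h
  have hright {σ : ℝ} (hσ : |σ| ≤ 1) (h : κ ≤ σ * (l + δ * -1)) :=
    integral_weighted_norm_sq_le_of_ode hb hy hg (hasDerivAt_exp_mul_add_mul δ ρ (-1)) hκ hσ h
  simp only [hya, hyb, norm_zero, ne_eq, OfNat.ofNat_ne_zero, not_false_eq_true, zero_pow,
    mul_zero, sub_zero, zero_sub] at hleft hright
  rw [integral_neckWeight_sq_mul ha hb (by fun_prop), integral_neckWeight_sq_mul ha hb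
    (by fun_prop), sq, mul_assoc, ← le_inv_mul_iff₀ hκ, mul_add κ, mul_add κ⁻¹]
  have hδ := abs_le.1 (le_refl |δ|)
  have h1 : |(1 : ℝ)| ≤ 1 := by simp
  have h1' : |(-1 : ℝ)| ≤ 1 := by simp
  rcases h with h | ⟨rfl, hκδ, hy0⟩
  · rcases le_abs.1 h with h | h
    · linarith [hleft h1 (by linarith), hright h1 (by linarith)]
    · linarith [hleft h1' (by linarith), hright h1' (by linarith)]
  · have hl := hleft h1 (by linarith)
    have hr := hright h1' (by linarith)
    simp only [hy0, norm_zero, ne_eq, OfNat.ofNat_ne_zero, not_false_eq_true, zero_pow, mul_zero,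
      neg_zero, zero_add] at hl hr
    linarith

end WeightedODE

section SliceFourier

/-- The `m`-th Fourier coefficient of the slice `t ↦ g (s, t)`. -/
def sliceCoeff (g : ℝ × ℝ → ℂ) (m : ℤ) (s : ℝ) : ℂ :=
  fourierCoeffOn zero_lt_one (fun t => g (s, t)) m

variable {g : ℝ × ℝ → ℂ}

theorem sliceCoeff_eq_integral (g : ℝ × ℝ → ℂ) (m : ℤ) (s : ℝ) :
    sliceCoeff g m s
      = ∫ t in (0 : ℝ)..1, fourier (-m) (t : AddCircle ((1 : ℝ) - 0)) * g (s, t) := by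
  simp [sliceCoeff, fourierCoeffOn_eq_integral]

theorem continuous_fourier_coe (m : ℤ) :
    Continuous fun t : ℝ => (fourier m (t : AddCircle ((1 : ℝ) - 0)) : ℂ) :=
  (map_continuous (fourier m)).comp (AddCircle.continuous_mk' _)

theorem sliceCoeff_add {h : ℝ × ℝ → ℂ} (hg : Continuous g) (hh : Continuous h) (m : ℤ) (s : ℝ) :
    sliceCoeff (fun p => g p + h p) m s = sliceCoeff g m s + sliceCoeff h m s := by
  have hm := continuous_fourier_coe (-m)
  simp only [sliceCoeff_eq_integral, mul_add]
  exact intervalIntegral.integral_add (Continuous.intervalIntegrable (by fun_prop) _ _)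
    (Continuous.intervalIntegrable (by fun_prop) _ _)

theorem sliceCoeff_const_mul (g : ℝ × ℝ → ℂ) (c : ℂ) (m : ℤ) (s : ℝ) :
    sliceCoeff (fun p => c * g p) m s = c * sliceCoeff g m s :=
  fourierCoeffOn.const_mul _ _ _ _

theorem sliceCoeff_eq_zero {s : ℝ} (h : ∀ t, g (s, t) = 0) (m : ℤ) : sliceCoeff g m s = 0 := by
  simp [sliceCoeff_eq_integral, h]

theorem sliceCoeff_zero (g : ℝ × ℝ → ℂ) (s : ℝ) :
    sliceCoeff g 0 s = ∫ t in (0 : ℝ)..1, g (s, t) := by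
  simp [sliceCoeff_eq_integral]

theorem continuous_sliceCoeff (hg : Continuous g) (m : ℤ) : Continuous (sliceCoeff g m) := by
  rw [funext (sliceCoeff_eq_integral g m)]
  exact intervalIntegral.continuous_parametric_intervalIntegral_of_continuous' (by fun_prop) 0 1

theorem hasDerivAt_sliceCoeff (hg : ContDiff ℝ ∞ g) (m : ℤ) (s : ℝ) :
    HasDerivAt (sliceCoeff g m) (sliceCoeff (pd 0 g) m s) s := by
  have hm := continuous_fourier_coe (-m)
  have hgc := hg.continuous
  have hdc := continuous_pd hg 0
  obtain ⟨M, hM⟩ := (isCompact_cyl (s - 1) (s + 1)).exists_bound_of_continuousOn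
    (f := fun p => (fourier (-m) (p.2 : AddCircle ((1 : ℝ) - 0)) : ℂ) * pd 0 g p)
    (Continuous.continuousOn (by fun_prop))
  rw [funext (sliceCoeff_eq_integral g m), sliceCoeff_eq_integral]
  refine (intervalIntegral.hasDerivAt_integral_of_dominated_loc_of_deriv_le
    (s := Icc (s - 1) (s + 1)) (bound := fun _ => M)
    (F' := fun s t => fourier (-m) (t : AddCircle ((1 : ℝ) - 0)) * pd 0 g (s, t))
    (Icc_mem_nhds (by linarith) (by linarith))
    (.of_forall fun x => Continuous.aestronglyMeasurable (by fun_prop))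
    (Continuous.intervalIntegrable (by fun_prop) _ _)
    (Continuous.aestronglyMeasurable (by fun_prop)) (.of_forall fun t ht x hx => ?_)
    intervalIntegrable_const
    (.of_forall fun t _ x _ => (hasDerivAt_pd_zero hg x t).const_mul _)).2
  rw [uIoc_of_le zero_le_one] at ht
  exact hM (x, t) ⟨hx, Ioc_subset_Icc_self ht⟩

theorem sliceCoeff_pd_one (hg : ContDiff ℝ ∞ g) (hper : Function.Periodic g (0, 1)) (m : ℤ)
    (s : ℝ) : sliceCoeff (pd 1 g) m s = 2 * π * Complex.I * m * sliceCoeff g m s := by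
  have hdc : Continuous fun t => pd 1 g (s, t) := (continuous_pd hg 1).comp (.prodMk_right s)
  have hends : g (s, 1) = g (s, 0) := by simpa using hper (s, 0)
  rcases eq_or_ne m 0 with rfl | hm
  · rw [sliceCoeff_zero, intervalIntegral.integral_eq_sub_of_hasDerivAt
      (fun t _ => hasDerivAt_pd_one hg s t) (hdc.intervalIntegrable _ _), hends, sub_self]
    simp
  · have hparts := fourierCoeffOn_of_hasDerivAt zero_lt_one hm
      (fun t _ => hasDerivAt_pd_one hg s t) (hdc.intervalIntegrable _ _)
    rw [hends, sub_self] at hparts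
    have hπ : (π : ℂ) ≠ 0 := mod_cast pi_ne_zero
    have hmC : (m : ℂ) ≠ 0 := mod_cast hm
    have hI := Complex.I_ne_zero
    rw [sliceCoeff, sliceCoeff, hparts]
    field_simp
    simp

theorem hasSum_norm_sliceCoeff_sq (hg : Continuous g) (s : ℝ) :
    HasSum (fun m => ‖sliceCoeff g m s‖ ^ 2) (∫ t in (0 : ℝ)..1, ‖g (s, t)‖ ^ 2) := by
  have hgs : Continuous fun t => g (s, t) := hg.comp (.prodMk_right s)
  obtain ⟨M, hM⟩ := isCompact_Icc.exists_bound_of_continuousOn hgs.continuousOn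
  have hL2 : MemLp (fun t => g (s, t)) 2 (volume.restrict (Ioc (0 : ℝ) 1)) :=
    .of_bound hgs.aestronglyMeasurable M ((ae_restrict_iff' measurableSet_Ioc).2
      (.of_forall fun t ht => hM t (Ioc_subset_Icc_self ht)))
  simpa only [sliceCoeff, sub_zero, inv_one, one_smul] using
    hasSum_sq_fourierCoeffOn zero_lt_one hL2

theorem hasSum_integral_norm_sliceCoeff_sq {a b : ℝ} (hab : a ≤ b) {w : ℝ → ℝ}
    (hw : Continuous w) (hg : Continuous g) :
    HasSum (fun m => ∫ s in a..b, w s ^ 2 * ‖sliceCoeff g m s‖ ^ 2)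
      (wInt a b w (fun p => ‖g p‖ ^ 2)) := by
  have hparseval (s : ℝ) := (hasSum_norm_sliceCoeff_sq hg s).mul_left (w s ^ 2)
  rw [wInt, setIntegral_cyl_eq_intervalIntegral hab (by fun_prop)]
  simp only [intervalIntegral.integral_const_mul]
  refine intervalIntegral.hasSum_integral_of_dominated_convergence
    (fun m s => w s ^ 2 * ‖sliceCoeff g m s‖ ^ 2) (fun m => ?_)
    (fun m => .of_forall fun s _ => (Real.norm_of_nonneg (by positivity)).le)
    (.of_forall fun s _ => (hparseval s).summable) ?_ (.of_forall fun s _ => hparseval s)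
  · have := continuous_sliceCoeff hg m
    exact Continuous.aestronglyMeasurable (by fun_prop)
  · simp only [(hparseval _).tsum_eq]
    exact Continuous.intervalIntegrable (by fun_prop) _ _

end SliceFourier

section WeightedFourierEstimate

variable {a b δ ρ κ : ℝ}

theorem hasDerivAt_sliceCoeff_cauchyRiemann {g : ℝ × ℝ → ℂ} (hg : ContDiff ℝ ∞ g)
    (hper : Function.Periodic g (0, 1)) (m : ℤ) (s : ℝ) :
    HasDerivAt (sliceCoeff g m) ((2 * π * m) • sliceCoeff g m s
      + sliceCoeff (fun p => pd 0 g p + Complex.I * pd 1 g p) m s) s := by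
  refine (hasDerivAt_sliceCoeff hg m s).congr_deriv ?_
  rw [sliceCoeff_add (h := fun p => Complex.I * pd 1 g p) (continuous_pd hg 0)
      (continuous_const.mul (continuous_pd hg 1)),
    sliceCoeff_const_mul, sliceCoeff_pd_one hg hper, Complex.real_smul]
  push_cast
  linear_combination (-(2 * π * m * sliceCoeff g m s)) * Complex.I_sq

theorem two_pi_le_abs_two_pi_mul {m : ℤ} (hm : m ≠ 0) : 2 * π ≤ |2 * π * m| := by
  rw [abs_mul, abs_of_pos two_pi_pos, ← Int.cast_abs]
  exact le_mul_of_one_le_right two_pi_pos.le (mod_cast Int.one_le_abs hm)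

theorem sq_mul_wInt_neckWeight_le_complex (ha : a ≤ 0) (hb : 0 ≤ b) (hκ : 0 < κ) (hκδ : κ ≤ δ)
    (hκ2π : κ ≤ 2 * π - δ) {g : ℝ × ℝ → ℂ} (hg : ContDiff ℝ ∞ g)
    (hper : Function.Periodic g (0, 1)) (hga : ∀ t, g (a, t) = 0) (hgb : ∀ t, g (b, t) = 0)
    (hmean : ∫ t in (0 : ℝ)..1, g (0, t) = 0) :
    κ ^ 2 * wInt a b (neckWeight δ ρ) (fun p => ‖g p‖ ^ 2)
      ≤ wInt a b (neckWeight δ ρ) (fun p => ‖pd 0 g p + Complex.I * pd 1 g p‖ ^ 2) := by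
  have hCR : Continuous fun p => pd 0 g p + Complex.I * pd 1 g p :=
    (continuous_pd hg 0).add (continuous_const.mul (continuous_pd hg 1))
  have hδ : |δ| = δ := abs_of_pos (hκ.trans_le hκδ)
  have hw := continuous_neckWeight δ ρ
  refine hasSum_le (fun m => sq_mul_integral_neckWeight_le_of_ode ha hb
      (hasDerivAt_sliceCoeff_cauchyRiemann hg hper m) (continuous_sliceCoeff hCR m) hκ
      (sliceCoeff_eq_zero hga m) (sliceCoeff_eq_zero hgb m) ?_)
    ((hasSum_integral_norm_sliceCoeff_sq (ha.trans hb) hw hg.continuous).mul_left (κ ^ 2))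
    (hasSum_integral_norm_sliceCoeff_sq (ha.trans hb) hw hCR)
  rcases eq_or_ne m 0 with rfl | hm
  · exact .inr ⟨by simp, hκδ, (sliceCoeff_zero g 0).trans hmean⟩
  · exact .inl (by linarith [two_pi_le_abs_two_pi_mul hm])

theorem sq_mul_wInt_neckWeight_le {n : ℕ} (ha : a ≤ 0) (hb : 0 ≤ b) (hκ : 0 < κ) (hκδ : κ ≤ δ)
    (hκ2π : κ ≤ 2 * π - δ) {g : ℝ × ℝ → Cn n} (hg : ContDiff ℝ ∞ g)
    (hper : Function.Periodic g (0, 1)) (hga : ∀ t, g (a, t) = 0) (hgb : ∀ t, g (b, t) = 0)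
    (hmean : ∫ t in (0 : ℝ)..1, g (0, t) = 0) :
    κ ^ 2 * wInt a b (neckWeight δ ρ) (derivSq 0 g)
      ≤ wInt a b (neckWeight δ ρ) (derivSq 0 (cauchyRiemann (fun _ => Jstd n) g)) := by
  let proj (k : Fin n) : Cn n →L[ℝ] ℂ := (EuclideanSpace.proj (𝕜 := ℂ) k).restrictScalars ℝ
  have hw := continuous_neckWeight δ ρ
  have hsplit {f : ℝ × ℝ → Cn n} (hf : Continuous f) : wInt a b (neckWeight δ ρ) (derivSq 0 f)
      = ∑ k, wInt a b (neckWeight δ ρ) (fun p => ‖proj k (f p)‖ ^ 2) := by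
    rw [← wInt_sum _ hw fun k => by fun_prop]
    congr 1 with p
    exact EuclideanSpace.norm_sq_eq (f p)
  rw [hsplit hg.continuous, hsplit (contDiff_cauchyRiemann contDiff_const hg).continuous,
    Finset.mul_sum]
  refine Finset.sum_le_sum fun k _ => ?_
  have hgk : IntervalIntegrable (fun t => g (0, t)) volume 0 1 :=
    (hg.continuous.comp (.prodMk_right 0)).intervalIntegrable _ _
  have hk := sq_mul_wInt_neckWeight_le_complex (ρ := ρ) (g := fun p => proj k (g p)) ha hb hκ hκδ
    hκ2π ((proj k).contDiff.comp hg) (hper.comp (proj k)) (by simp [hga]) (by simp [hgb])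
    (by rw [(proj k).intervalIntegral_comp_comm hgk, hmean, map_zero])
  simp only [pd_clm_comp (proj k) hg] at hk
  simpa [cauchyRiemann, Jstd, proj] using hk

end WeightedFourierEstimate

/-! ### Cutoff weights on the neck -/

section CutoffWeight

theorem abs_iteratedDeriv_mul_le {f g : ℝ → ℝ} (hf : ContDiff ℝ ∞ f) (hg : ContDiff ℝ ∞ g)
    {k : ℕ} {s F G : ℝ} (hF : ∀ i ≤ k, |iteratedDeriv i f s| ≤ F)
    (hG : ∀ i ≤ k, |iteratedDeriv i g s| ≤ G) {i : ℕ} (hi : i ≤ k) :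
    |iteratedDeriv i (fun s => f s * g s) s| ≤ 2 ^ k * (F * G) := by
  have hF₀ : 0 ≤ F := (abs_nonneg _).trans (hF 0 k.zero_le)
  have hG₀ : 0 ≤ G := (abs_nonneg _).trans (hG 0 k.zero_le)
  simp only [← Real.norm_eq_abs, ← norm_iteratedFDeriv_eq_norm_iteratedDeriv] at hF hG ⊢
  calc ‖iteratedFDeriv ℝ i (fun s => f s * g s) s‖
      ≤ ∑ j ∈ Finset.range (i + 1), (i.choose j : ℝ) * ‖iteratedFDeriv ℝ j f s‖
          * ‖iteratedFDeriv ℝ (i - j) g s‖ :=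
        norm_iteratedFDeriv_mul_le hf hg s (mod_cast le_top)
    _ ≤ ∑ j ∈ Finset.range (i + 1), (i.choose j : ℝ) * (F * G) := by
        refine Finset.sum_le_sum fun j hj => ?_
        rw [mul_assoc]
        have hj := Finset.mem_range_succ_iff.1 hj
        gcongr
        exacts [hF j (hj.trans hi), hG _ ((i.sub_le j).trans hi)]
    _ = 2 ^ i * (F * G) := by
        rw [← Finset.sum_mul]
        exact_mod_cast congrArg (fun m : ℕ => (m : ℝ) * (F * G)) (Nat.sum_range_choose i)
    _ ≤ 2 ^ k * (F * G) := by gcongr; norm_num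

/-- A smooth step from `0` to `1` which is locally constant outside `[1/3, 2/3]`. -/
def step (x : ℝ) : ℝ :=
  smoothTransition (3 * x - 1)

theorem contDiff_step : ContDiff ℝ ∞ step :=
  smoothTransition.contDiff.comp (by fun_prop)

theorem step_eq_zero {x : ℝ} (hx : x ≤ 1 / 3) : step x = 0 :=
  smoothTransition.zero_of_nonpos (by linarith)

theorem step_eq_one {x : ℝ} (hx : 2 / 3 ≤ x) : step x = 1 :=
  smoothTransition.one_of_one_le (by linarith)

theorem exists_abs_iteratedDeriv_step_le (k : ℕ) :
    ∃ B, ∀ i ≤ k, ∀ x, |iteratedDeriv i step x| ≤ B := by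
  have hbdd (i : ℕ) : ∃ B, ∀ x, |iteratedDeriv i step x| ≤ B := by
    rcases i with _ | i
    · refine ⟨1, fun x => ?_⟩
      rw [iteratedDeriv_zero, step, abs_of_nonneg (smoothTransition.nonneg _)]
      exact smoothTransition.le_one _
    · refine (contDiff_step.continuous_iteratedDeriv (i + 1)
        (mod_cast le_top)).bounded_above_of_compact_support (HasCompactSupport.intro
          (isCompact_Icc (a := (1 / 3 : ℝ)) (b := 2 / 3)) fun x hx => ?_)
      have hconst : ∃ c, step =ᶠ[𝓝 x] fun _ => c := by
        rcases not_and_or.1 hx with hx | hx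
        · exact ⟨0, (eventually_lt_nhds (not_le.1 hx)).mono fun y hy => step_eq_zero hy.le⟩
        · exact ⟨1, (eventually_gt_nhds (not_le.1 hx)).mono fun y hy => step_eq_one hy.le⟩
      obtain ⟨c, hc⟩ := hconst
      rw [hc.iteratedDeriv_eq, iteratedDeriv_const, if_neg i.succ_ne_zero]
  choose B hB using hbdd
  refine ⟨∑ i ∈ Finset.range (k + 1), B i, fun i hi x => (hB i x).trans ?_⟩
  exact Finset.single_le_sum (f := B) (fun j _ => (abs_nonneg _).trans (hB j 0))
    (Finset.mem_range_succ_iff.2 hi)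

/-- A smooth cutoff equal to `1` near `[-ρ, ρ]` and to `0` near `±(ρ + 1)`, with derivatives
bounded uniformly in `ρ`. -/
def neckCutoff (ρ s : ℝ) : ℝ :=
  step (ρ + 1 - s) * step (ρ + 1 + s)

theorem contDiff_neckCutoff (ρ : ℝ) : ContDiff ℝ ∞ (neckCutoff ρ) :=
  (contDiff_step.comp (by fun_prop)).mul (contDiff_step.comp (by fun_prop))

theorem neckCutoff_eventuallyEq_one {ρ s : ℝ} (hs : |s| ≤ ρ) : neckCutoff ρ =ᶠ[𝓝 s] 1 := by
  have hlt : |s| < ρ + 1 / 3 := by linarith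
  filter_upwards [continuous_abs.continuousAt.eventually_lt_const hlt] with x hx
  have hx := abs_lt.1 hx
  rw [neckCutoff, step_eq_one (by linarith), step_eq_one (by linarith), one_mul, Pi.one_apply]

theorem neckCutoff_eventuallyEq_zero_left (ρ : ℝ) : neckCutoff ρ =ᶠ[𝓝 (-ρ - 1)] 0 := by
  filter_upwards [eventually_lt_nhds (show -ρ - 1 < -ρ - 2 / 3 by linarith)] with x hx
  rw [neckCutoff, step_eq_zero (x := ρ + 1 + x) (by linarith), mul_zero, Pi.zero_apply]

theorem neckCutoff_eventuallyEq_zero_right (ρ : ℝ) : neckCutoff ρ =ᶠ[𝓝 (ρ + 1)] 0 := by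
  filter_upwards [eventually_gt_nhds (show ρ + 2 / 3 < ρ + 1 by linarith)] with x hx
  rw [neckCutoff, step_eq_zero (by linarith), zero_mul, Pi.zero_apply]

theorem exists_abs_iteratedDeriv_neckCutoff_le (k : ℕ) :
    ∃ B, ∀ i ≤ k, ∀ ρ s, |iteratedDeriv i (neckCutoff ρ) s| ≤ B := by
  obtain ⟨B, hB⟩ := exists_abs_iteratedDeriv_step_le k
  refine ⟨2 ^ k * (B * B), fun i hi ρ s => abs_iteratedDeriv_mul_le
    (f := fun s => step (ρ + 1 - s)) (g := fun s => step (ρ + 1 + s))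
    (contDiff_step.comp (by fun_prop)) (contDiff_step.comp (by fun_prop)) (fun j hj => ?_)
    (fun j hj => ?_) hi⟩
  · simpa [iteratedDeriv_comp_const_sub, abs_mul] using hB j hj (ρ + 1 - s)
  · simpa [iteratedDeriv_comp_const_add] using hB j hj (ρ + 1 + s)

/-- A smooth weight comparable to `neckWeight`, obtained by smoothing `|s|` to `√(1 + s²)`. -/
def smoothNeckWeight (δ ρ s : ℝ) : ℝ :=
  exp (δ * (ρ - √(1 + s ^ 2)))

theorem smoothNeckWeight_pos (δ ρ s : ℝ) : 0 < smoothNeckWeight δ ρ s :=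
  exp_pos _

theorem contDiff_smoothNeckWeight (δ ρ : ℝ) : ContDiff ℝ ∞ (smoothNeckWeight δ ρ) :=
  (contDiff_const.mul (contDiff_const.sub
    (ContDiff.sqrt (by fun_prop) fun s => by positivity))).exp

theorem abs_le_sqrt_one_add_sq (s : ℝ) : |s| ≤ √(1 + s ^ 2) :=
  abs_le_sqrt (by linarith)

theorem sqrt_one_add_sq_le (s : ℝ) : √(1 + s ^ 2) ≤ 1 + |s| :=
  sqrt_le_iff.2 ⟨by positivity, by nlinarith [sq_abs s, abs_nonneg s]⟩

theorem hasDerivAt_sqrt_one_add_sq (s : ℝ) :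
    HasDerivAt (fun s : ℝ => √(1 + s ^ 2)) (s / √(1 + s ^ 2)) s := by
  refine (((hasDerivAt_pow 2 s).const_add 1).sqrt (by positivity)).congr_deriv ?_
  field_simp
  simp

theorem hasDerivAt_div_sqrt_one_add_sq (s : ℝ) :
    HasDerivAt (fun s : ℝ => s / √(1 + s ^ 2))
      ((1 - (s / √(1 + s ^ 2)) ^ 2) / √(1 + s ^ 2)) s := by
  have hr : 0 < √(1 + s ^ 2) := by positivity
  refine ((hasDerivAt_id s).div (hasDerivAt_sqrt_one_add_sq s) hr.ne').congr_deriv ?_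
  simp only [id_eq]
  field_simp

theorem hasDerivAt_smoothNeckWeight (δ ρ s : ℝ) : HasDerivAt (smoothNeckWeight δ ρ)
    (-(δ * (s / √(1 + s ^ 2))) * smoothNeckWeight δ ρ s) s := by
  refine (((hasDerivAt_sqrt_one_add_sq s).const_sub ρ).const_mul δ).exp.congr_deriv ?_
  rw [smoothNeckWeight]
  ring

theorem hasDerivAt_deriv_smoothNeckWeight (δ ρ s : ℝ) :
    HasDerivAt (deriv (smoothNeckWeight δ ρ))
      (((δ * (s / √(1 + s ^ 2))) ^ 2 - δ * ((1 - (s / √(1 + s ^ 2)) ^ 2) / √(1 + s ^ 2)))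
        * smoothNeckWeight δ ρ s) s := by
  rw [funext fun s => (hasDerivAt_smoothNeckWeight δ ρ s).deriv]
  refine ((((hasDerivAt_div_sqrt_one_add_sq s).const_mul δ).neg).mul
    (hasDerivAt_smoothNeckWeight δ ρ s)).congr_deriv ?_
  simp only [Pi.neg_apply]
  ring

theorem abs_iteratedDeriv_smoothNeckWeight_le {δ : ℝ} (hδ : 0 ≤ δ) (ρ s : ℝ) {i : ℕ}
    (hi : i ≤ 2) :
    |iteratedDeriv i (smoothNeckWeight δ ρ) s| ≤ (1 + δ) ^ 2 * smoothNeckWeight δ ρ s := by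
  have hE := smoothNeckWeight_pos δ ρ s
  have hr : 1 ≤ √(1 + s ^ 2) := one_le_sqrt.2 (by nlinarith)
  have hq : |s / √(1 + s ^ 2)| ≤ 1 := by
    rw [abs_div, abs_of_nonneg (sqrt_nonneg _)]
    exact div_le_one_of_le₀ (abs_le_sqrt_one_add_sq s) (sqrt_nonneg _)
  have hq2 : (s / √(1 + s ^ 2)) ^ 2 ≤ 1 := sq_le_one_iff_abs_le_one _ |>.2 hq
  have hq' : |(1 - (s / √(1 + s ^ 2)) ^ 2) / √(1 + s ^ 2)| ≤ 1 := by
    rw [abs_of_nonneg (by have := sub_nonneg.2 hq2; positivity)]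
    exact div_le_one_of_le₀ (by nlinarith [sq_nonneg (s / √(1 + s ^ 2))]) (sqrt_nonneg _)
  interval_cases i
  · rw [iteratedDeriv_zero, abs_of_pos hE]
    exact le_mul_of_one_le_left hE.le (by nlinarith)
  · rw [iteratedDeriv_one, (hasDerivAt_smoothNeckWeight δ ρ s).deriv, abs_mul, abs_of_pos hE,
      abs_neg, abs_mul, abs_of_nonneg hδ]
    gcongr
    nlinarith [mul_le_of_le_one_right hδ hq]
  · rw [iteratedDeriv_succ, iteratedDeriv_one, (hasDerivAt_deriv_smoothNeckWeight δ ρ s).deriv,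
      abs_mul, abs_of_pos hE]
    gcongr
    refine (abs_sub _ _).trans ?_
    rw [abs_mul, abs_of_nonneg hδ, abs_of_nonneg (sq_nonneg _), mul_pow]
    nlinarith [mul_le_of_le_one_right hδ hq', mul_le_of_le_one_right (sq_nonneg δ) hq2]

theorem smoothNeckWeight_le_one {δ ρ s : ℝ} (hδ : 0 ≤ δ) (hs : ρ ≤ |s|) :
    smoothNeckWeight δ ρ s ≤ 1 :=
  exp_le_one_iff.2 (mul_nonpos_of_nonneg_of_nonpos hδ
    (sub_nonpos.2 (hs.trans (abs_le_sqrt_one_add_sq s))))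

theorem smoothNeckWeight_le_neckWeight {δ : ℝ} (hδ : 0 ≤ δ) (ρ s : ℝ) :
    smoothNeckWeight δ ρ s ≤ neckWeight δ ρ s :=
  exp_le_exp.2 (mul_le_mul_of_nonneg_left (sub_le_sub_left (abs_le_sqrt_one_add_sq s) ρ) hδ)

theorem neckWeight_le_exp_mul_smoothNeckWeight {δ : ℝ} (hδ : 0 ≤ δ) (ρ s : ℝ) :
    neckWeight δ ρ s ≤ exp δ * smoothNeckWeight δ ρ s := by
  rw [neckWeight, smoothNeckWeight, ← exp_add]
  exact exp_le_exp.2 (by nlinarith [sqrt_one_add_sq_le s])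

end CutoffWeight

section ControlledWeights

/-- The integral of `G` over the two end pieces `[-ρ-1, -ρ] × I` and `[ρ, ρ+1] × I`. -/
def endsInt (ρ : ℝ) (G : ℝ × ℝ → ℝ) : ℝ :=
  (∫ p in cyl (-ρ - 1) (-ρ), G p) + ∫ p in cyl ρ (ρ + 1), G p

theorem endsInt_nonneg {ρ : ℝ} {G : ℝ × ℝ → ℝ} (hG : ∀ p, 0 ≤ G p) : 0 ≤ endsInt ρ G :=
  add_nonneg (integral_nonneg hG) (integral_nonneg hG)

theorem setIntegral_cyl_add_adjacent {a b c : ℝ} (hab : a ≤ b) (hbc : b ≤ c) {G : ℝ × ℝ → ℝ}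
    (hG : Continuous G) :
    (∫ p in cyl a b, G p) + ∫ p in cyl b c, G p = ∫ p in cyl a c, G p := by
  have hslice : Continuous fun s => ∫ t in (0 : ℝ)..1, G (s, t) :=
    intervalIntegral.continuous_parametric_intervalIntegral_of_continuous' (by fun_prop) 0 1
  rw [setIntegral_cyl_eq_intervalIntegral hab hG, setIntegral_cyl_eq_intervalIntegral hbc hG,
    setIntegral_cyl_eq_intervalIntegral (hab.trans hbc) hG]
  exact intervalIntegral.integral_add_adjacent_intervals (hslice.intervalIntegrable _ _)
    (hslice.intervalIntegrable _ _)

theorem setIntegral_cyl_eq_add_endsInt {ρ : ℝ} (hρ : 0 ≤ ρ) {G : ℝ × ℝ → ℝ} (hG : Continuous G) :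
    ∫ p in cyl (-ρ - 1) (ρ + 1), G p = (∫ p in cyl (-ρ) ρ, G p) + endsInt ρ G := by
  rw [← setIntegral_cyl_add_adjacent (b := ρ) (by linarith) (by linarith) hG,
    ← setIntegral_cyl_add_adjacent (b := -ρ) (by linarith) (by linarith) hG, endsInt]
  ring

/-- The squared weight `f²` is bounded by `K w²` on the neck `|s| ≤ ρ` and by `K` outside. -/
structure IsControlled (ρ K : ℝ) (w f : ℝ → ℝ) : Prop where
  sq_le_mul_sq : ∀ s, |s| ≤ ρ → f s ^ 2 ≤ K * w s ^ 2
  sq_le : ∀ s, ρ ≤ |s| → f s ^ 2 ≤ K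

variable {ρ K : ℝ} {w f : ℝ → ℝ}

theorem IsControlled.nonneg (h : IsControlled ρ K w f) : 0 ≤ K :=
  (sq_nonneg _).trans (h.sq_le |ρ| ((le_abs_self ρ).trans (abs_abs ρ).ge))

theorem IsControlled.mono {K' : ℝ} (h : IsControlled ρ K w f) (hK : K ≤ K') :
    IsControlled ρ K' w f where
  sq_le_mul_sq s hs := (h.sq_le_mul_sq s hs).trans (by gcongr)
  sq_le s hs := (h.sq_le s hs).trans hK

theorem IsControlled.wInt_le (h : IsControlled ρ K w f) (hρ : 0 ≤ ρ) (hw : Continuous w)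
    (hf : Continuous f) {G : ℝ × ℝ → ℝ} (hG : Continuous G) (hG₀ : ∀ p, 0 ≤ G p) :
    wInt (-ρ - 1) (ρ + 1) f G ≤ K * (wInt (-ρ - 1) (ρ + 1) w G + endsInt ρ G) := by
  have hneck : ∫ p in cyl (-ρ) ρ, f p.1 ^ 2 * G p ≤ K * ∫ p in cyl (-ρ) ρ, w p.1 ^ 2 * G p := by
    rw [← integral_const_mul]
    refine setIntegral_cyl_mono (by fun_prop) (by fun_prop) fun p hp => ?_
    rw [← mul_assoc]
    exact mul_le_mul_of_nonneg_right (h.sq_le_mul_sq p.1 (abs_le.2 hp)) (hG₀ p)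
  have hend {a b : ℝ} (hab : ∀ s ∈ Icc a b, ρ ≤ |s|) :
      ∫ p in cyl a b, f p.1 ^ 2 * G p ≤ K * ∫ p in cyl a b, G p := by
    rw [← integral_const_mul]
    exact setIntegral_cyl_mono (by fun_prop) (by fun_prop) fun p hp =>
      mul_le_mul_of_nonneg_right (h.sq_le p.1 (hab p.1 hp)) (hG₀ p)
  have hends : endsInt ρ (fun p => f p.1 ^ 2 * G p) ≤ K * endsInt ρ G := by
    rw [endsInt, endsInt, mul_add]
    exact add_le_add (hend fun s hs => le_abs.2 (.inr (by linarith [hs.2])))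
      (hend fun s hs => le_abs.2 (.inl hs.1))
  have hw₀ : 0 ≤ endsInt ρ (fun p => w p.1 ^ 2 * G p) :=
    endsInt_nonneg fun p => mul_nonneg (sq_nonneg _) (hG₀ p)
  rw [wInt, wInt, setIntegral_cyl_eq_add_endsInt hρ (by fun_prop),
    setIntegral_cyl_eq_add_endsInt hρ (by fun_prop)]
  linarith [mul_nonneg h.nonneg hw₀]

end ControlledWeights

section CutoffBound

variable {δ ρ K : ℝ}

/-- The smooth weight used in the energy estimates: the exponential weight cut off at the ends. -/
def cutoffWeight (δ ρ s : ℝ) : ℝ :=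
  neckCutoff ρ s * smoothNeckWeight δ ρ s

theorem contDiff_cutoffWeight (δ ρ : ℝ) : ContDiff ℝ ∞ (cutoffWeight δ ρ) :=
  (contDiff_neckCutoff ρ).mul (contDiff_smoothNeckWeight δ ρ)

theorem isCutoff_iteratedDeriv_cutoffWeight (δ ρ : ℝ) (i : ℕ) :
    IsCutoff (-ρ - 1) (ρ + 1) (iteratedDeriv i (cutoffWeight δ ρ)) := by
  have hsmooth : ContDiff ℝ ∞ (iteratedDeriv i (cutoffWeight δ ρ)) := by
    rw [iteratedDeriv_eq_iterate]
    exact (contDiff_cutoffWeight δ ρ).iterate_deriv i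
  have hzero {s : ℝ} (h : neckCutoff ρ =ᶠ[𝓝 s] 0) : iteratedDeriv i (cutoffWeight δ ρ) s = 0 := by
    have : cutoffWeight δ ρ =ᶠ[𝓝 s] fun _ => 0 := h.mono fun x hx => by
      rw [cutoffWeight, hx, Pi.zero_apply, zero_mul]
    rw [this.iteratedDeriv_eq, iteratedDeriv_const, ite_self]
  exact ⟨hsmooth, hzero (neckCutoff_eventuallyEq_zero_left ρ),
    hzero (neckCutoff_eventuallyEq_zero_right ρ)⟩

theorem exists_isControlled_iteratedDeriv_cutoffWeight (hδ : 0 ≤ δ) :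
    ∃ K, ∀ i ≤ 2, ∀ ρ,
      IsControlled ρ K (cutoffWeight δ ρ) (iteratedDeriv i (cutoffWeight δ ρ)) := by
  obtain ⟨B, hB⟩ := exists_abs_iteratedDeriv_neckCutoff_le 2
  refine ⟨((1 + δ) ^ 2) ^ 2 + (2 ^ 2 * (B * (1 + δ) ^ 2)) ^ 2, fun i hi ρ => ⟨?_, ?_⟩⟩ <;>
    intro s hs
  · have hnear : cutoffWeight δ ρ =ᶠ[𝓝 s] smoothNeckWeight δ ρ :=
      (neckCutoff_eventuallyEq_one hs).mono fun x hx => by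
        rw [cutoffWeight, hx, Pi.one_apply, one_mul]
    rw [hnear.iteratedDeriv_eq, hnear.eq_of_nhds, add_mul, ← mul_pow, ← sq_abs]
    exact le_add_of_le_of_nonneg
      (by gcongr; exact abs_iteratedDeriv_smoothNeckWeight_le hδ ρ s hi) (by positivity)
  · rw [← sq_abs]
    refine le_add_of_nonneg_of_le (by positivity) ?_
    gcongr
    exact abs_iteratedDeriv_mul_le (contDiff_neckCutoff ρ) (contDiff_smoothNeckWeight δ ρ)
      (fun j hj => hB j hj ρ s) (fun j hj => (abs_iteratedDeriv_smoothNeckWeight_le hδ ρ s hj).trans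
        (mul_le_of_le_one_right (by positivity) (smoothNeckWeight_le_one hδ hs))) hi

theorem exists_isControlled_deriv_neckCutoff_mul_neckWeight (hδ : 0 ≤ δ) :
    ∃ K, ∀ ρ, IsControlled ρ K 0 (fun s => deriv (neckCutoff ρ) s * neckWeight δ ρ s) := by
  obtain ⟨B, hB⟩ := exists_abs_iteratedDeriv_neckCutoff_le 1
  refine ⟨B ^ 2, fun ρ => ⟨fun s hs => ?_, fun s hs => ?_⟩⟩
  · have hconst : neckCutoff ρ =ᶠ[𝓝 s] fun _ => 1 := neckCutoff_eventuallyEq_one hs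
    simp [hconst.deriv_eq]
  · have hw₀ := neckWeight_pos δ ρ s
    have hw : neckWeight δ ρ s ≤ 1 :=
      exp_le_one_iff.2 (mul_nonpos_of_nonneg_of_nonpos hδ (sub_nonpos.2 hs))
    have hχ : |deriv (neckCutoff ρ) s| ≤ B := by simpa using hB 1 le_rfl ρ s
    rw [← sq_abs, abs_mul, abs_of_pos hw₀]
    gcongr
    exact (mul_le_of_le_one_right (abs_nonneg _) hw).trans hχ

theorem cutoffWeight_sq_le (hδ : 0 ≤ δ) (ρ s : ℝ) :
    cutoffWeight δ ρ s ^ 2 ≤ (neckCutoff ρ s * neckWeight δ ρ s) ^ 2 := by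
  have := smoothNeckWeight_pos δ ρ s
  rw [cutoffWeight, mul_pow, mul_pow]
  gcongr
  exact smoothNeckWeight_le_neckWeight hδ ρ s

theorem sq_neckCutoff_mul_neckWeight_le (hδ : 0 ≤ δ) (ρ s : ℝ) :
    (neckCutoff ρ s * neckWeight δ ρ s) ^ 2 ≤ (exp δ * cutoffWeight δ ρ s) ^ 2 := by
  rw [cutoffWeight, mul_left_comm, mul_pow, mul_pow _ (_ * _)]
  gcongr
  · exact (neckWeight_pos δ ρ s).le
  · exact neckWeight_le_exp_mul_smoothNeckWeight hδ ρ s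

theorem sq_neckCutoff_mul_neckWeight_le_neckWeight_sq (δ ρ s : ℝ) :
    (neckCutoff ρ s * neckWeight δ ρ s) ^ 2 ≤ neckWeight δ ρ s ^ 2 := by
  have hχ₀ : 0 ≤ neckCutoff ρ s :=
    mul_nonneg (smoothTransition.nonneg _) (smoothTransition.nonneg _)
  have hχ₁ : neckCutoff ρ s ≤ 1 :=
    mul_le_one₀ (smoothTransition.le_one _) (smoothTransition.nonneg _) (smoothTransition.le_one _)
  rw [mul_pow]
  exact mul_le_of_le_one_left (sq_nonneg _) (pow_le_one₀ hχ₀ hχ₁)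

/-- A constant `K`, independent of `ρ`, in all comparisons between the cutoff weights. -/
structure IsCutoffBound (δ K : ℝ) : Prop where
  exp_sq_le : exp δ ^ 2 ≤ K
  isControlled_deriv : ∀ ρ, IsControlled ρ K (cutoffWeight δ ρ) (deriv (cutoffWeight δ ρ))
  isControlled_deriv_deriv :
    ∀ ρ, IsControlled ρ K (cutoffWeight δ ρ) (deriv (deriv (cutoffWeight δ ρ)))
  isControlled_deriv_neckCutoff_mul_neckWeight :
    ∀ ρ, IsControlled ρ K 0 (fun s => deriv (neckCutoff ρ) s * neckWeight δ ρ s)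

theorem exists_isCutoffBound (hδ : 0 ≤ δ) : ∃ K, IsCutoffBound δ K := by
  obtain ⟨K₁, h₁⟩ := exists_isControlled_iteratedDeriv_cutoffWeight hδ
  obtain ⟨K₂, h₂⟩ := exists_isControlled_deriv_neckCutoff_mul_neckWeight hδ
  refine ⟨max (exp δ ^ 2) (max K₁ K₂), le_max_left _ _, fun ρ => ?_, fun ρ => ?_, fun ρ => ?_⟩
  · simpa using (h₁ 1 (by norm_num) ρ).mono ((le_max_left _ _).trans (le_max_right _ _))
  · simpa [iteratedDeriv_succ] using
      (h₁ 2 le_rfl ρ).mono ((le_max_left _ _).trans (le_max_right _ _))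
  · exact (h₂ ρ).mono ((le_max_right _ _).trans (le_max_right _ _))

end CutoffBound

/-! ### The neck estimate in terms of `derivSq` -/

section ZerothOrder

variable {E : Type*} [NormedAddCommGroup E]

theorem norm_add_sub_sq_le_three_mul {E : Type*} [SeminormedAddCommGroup E] (x y z : E) :
    ‖x + y - z‖ ^ 2 ≤ 3 * (‖x‖ ^ 2 + ‖y‖ ^ 2 + ‖z‖ ^ 2) := by
  have htri : ‖x + y - z‖ ≤ ‖x‖ + ‖y‖ + ‖z‖ :=
    (norm_sub_le _ _).trans (by gcongr; exact norm_add_le x y)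
  calc ‖x + y - z‖ ^ 2 ≤ (‖x‖ + ‖y‖ + ‖z‖) ^ 2 := by gcongr
    _ ≤ 3 * (‖x‖ ^ 2 + ‖y‖ ^ 2 + ‖z‖ ^ 2) := by
      nlinarith [sq_nonneg (‖x‖ - ‖y‖), sq_nonneg (‖y‖ - ‖z‖), sq_nonneg (‖x‖ - ‖z‖)]

theorem derivSq_zero_cauchyRiemann_const_smul_le [NormedSpace ℝ E] {κ : ℝ} {χ : ℝ → ℝ}
    {J₀ : E →L[ℝ] E} {A : ℝ × ℝ → E →L[ℝ] E} {v : ℝ × ℝ → E} (hχ : ContDiff ℝ ∞ χ)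
    (hv : ContDiff ℝ ∞ v) {p : ℝ × ℝ} (hA : ‖A p - J₀‖ ≤ κ) :
    derivSq 0 (cauchyRiemann (fun _ => J₀) fun q => χ q.1 • v q) p
      ≤ 3 * (deriv χ p.1 ^ 2 * derivSq 0 v p + χ p.1 ^ 2 * derivSq 0 (cauchyRiemann A v) p
        + κ ^ 2 * (χ p.1 ^ 2 * derivSq 1 v p)) := by
  have hsplit : cauchyRiemann (fun _ => J₀) (fun q => χ q.1 • v q) p
      = deriv χ p.1 • v p + χ p.1 • cauchyRiemann A v p - χ p.1 • (A p - J₀) (pd 1 v p) := by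
    rw [cauchyRiemann_smul hχ hv]
    simp only [cauchyRiemann, sub_apply, smul_add, smul_sub]
    abel
  have hcoeff : ‖(A p - J₀) (pd 1 v p)‖ ^ 2 ≤ κ ^ 2 * derivSq 1 v p :=
    calc ‖(A p - J₀) (pd 1 v p)‖ ^ 2 ≤ (κ * ‖pd 1 v p‖) ^ 2 := by
          gcongr
          exact (A p - J₀).le_of_opNorm_le hA _
      _ = κ ^ 2 * ‖pd 1 v p‖ ^ 2 := mul_pow _ _ _
      _ ≤ κ ^ 2 * derivSq 1 v p := by gcongr; exact derivSq_pd_le 0 v 1 p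
  rw [derivSq_zero, hsplit]
  refine (norm_add_sub_sq_le_three_mul _ _ _).trans ?_
  simp only [norm_real_smul_sq, derivSq_zero]
  rw [mul_left_comm (κ ^ 2)]
  gcongr

theorem wInt_derivSq_zero_smul [NormedSpace ℝ E] (a b : ℝ) (χ w : ℝ → ℝ) (v : ℝ × ℝ → E) :
    wInt a b w (derivSq 0 fun q => χ q.1 • v q) = wInt a b (fun s => χ s * w s) (derivSq 0 v) := by
  simp only [wInt, derivSq_zero, norm_real_smul_sq]
  congr! 2
  ring

variable [InnerProductSpace ℝ E] {a b κ : ℝ} {χ w : ℝ → ℝ} {J₀ : E →L[ℝ] E}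
  {A : ℝ × ℝ → E →L[ℝ] E} {v : ℝ × ℝ → E}

theorem wInt_derivSq_zero_cauchyRiemann_const_smul_le (hχ : ContDiff ℝ ∞ χ) (hw : Continuous w)
    (hA : ContDiff ℝ ∞ A) (hAκ : ∀ p : ℝ × ℝ, p.1 ∈ Icc a b → ‖A p - J₀‖ ≤ κ)
    (hv : ContDiff ℝ ∞ v) :
    wInt a b w (derivSq 0 (cauchyRiemann (fun _ => J₀) fun q => χ q.1 • v q))
      ≤ 3 * (wInt a b (fun s => deriv χ s * w s) (derivSq 0 v)
        + wInt a b (fun s => χ s * w s) (derivSq 0 (cauchyRiemann A v))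
        + κ ^ 2 * wInt a b (fun s => χ s * w s) (derivSq 1 v)) := by
  have hχc := hχ.continuous
  have hχc' : Continuous (deriv χ) := hχ.continuous_deriv (by simp)
  have hχv : ContDiff ℝ ∞ fun q : ℝ × ℝ => χ q.1 • v q := (hχ.comp contDiff_fst).smul hv
  have hc := continuous_derivSq (contDiff_cauchyRiemann (contDiff_const (c := J₀)) hχv) 0
  have hcA := continuous_derivSq (contDiff_cauchyRiemann hA hv) 0
  have hc₀ := continuous_derivSq hv 0
  have hc₁ := continuous_derivSq hv 1
  refine (wInt_mono hw hc (by fun_prop) fun p hp =>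
    derivSq_zero_cauchyRiemann_const_smul_le hχ hv (hAκ p hp)).trans_eq ?_
  rw [wInt_const_mul, wInt_add hw (by fun_prop) (by fun_prop),
    wInt_add hw (by fun_prop) (by fun_prop), wInt_const_mul]
  simp only [wInt, mul_pow, mul_assoc, mul_left_comm (w _ ^ 2)]

end ZerothOrder

section NeckEstimate

variable {n : ℕ} {δ ρ κ κ₀ K : ℝ} {A : ℝ × ℝ → Cn n →L[ℝ] Cn n} {v : ℝ × ℝ → Cn n}

theorem IsCutoffBound.one_le (hK : IsCutoffBound δ K) (hδ : 0 ≤ δ) : 1 ≤ K :=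
  (one_le_pow₀ (one_le_exp hδ)).trans hK.exp_sq_le

theorem IsCutoffBound.wInt_neckCutoff_mul_neckWeight_le (hK : IsCutoffBound δ K) (hδ : 0 ≤ δ)
    {a b : ℝ} {G : ℝ × ℝ → ℝ} (hG : Continuous G) (hG₀ : ∀ p, 0 ≤ G p) :
    wInt a b (fun s => neckCutoff ρ s * neckWeight δ ρ s) G
      ≤ K * wInt a b (cutoffWeight δ ρ) G := by
  have hχ := (contDiff_neckCutoff ρ).continuous
  have hnW := continuous_neckWeight δ ρ
  have hw := (contDiff_cutoffWeight δ ρ).continuous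
  calc wInt a b (fun s => neckCutoff ρ s * neckWeight δ ρ s) G
      ≤ wInt a b (fun s => exp δ * cutoffWeight δ ρ s) G :=
        wInt_mono_weight (by fun_prop) (by fun_prop) hG hG₀
          fun s _ => sq_neckCutoff_mul_neckWeight_le hδ ρ s
    _ = exp δ ^ 2 * wInt a b (cutoffWeight δ ρ) G := wInt_const_mul_weight _
    _ ≤ K * wInt a b (cutoffWeight δ ρ) G :=
        mul_le_mul_of_nonneg_right hK.exp_sq_le (wInt_nonneg hG₀)

theorem sq_mul_wInt_cutoffWeight_derivSq_zero_le (hκ₀ : 0 < κ₀) (hκ₀δ : κ₀ ≤ δ)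
    (hκ₀π : κ₀ ≤ 2 * π - δ) (hρ : 0 ≤ ρ) (hv : ContDiff ℝ ∞ v)
    (hper : Function.Periodic v (0, 1)) (hmean : ∫ t in (0 : ℝ)..1, v (0, t) = 0) :
    κ₀ ^ 2 * wInt (-ρ - 1) (ρ + 1) (cutoffWeight δ ρ) (derivSq 0 v)
      ≤ wInt (-ρ - 1) (ρ + 1) (neckWeight δ ρ)
        (derivSq 0 (cauchyRiemann (fun _ => Jstd n) fun q => neckCutoff ρ q.1 • v q)) := by
  have hχ := contDiff_neckCutoff ρ
  have hχc := hχ.continuous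
  have hnW := continuous_neckWeight δ ρ
  calc κ₀ ^ 2 * wInt (-ρ - 1) (ρ + 1) (cutoffWeight δ ρ) (derivSq 0 v)
      ≤ κ₀ ^ 2 * wInt (-ρ - 1) (ρ + 1) (neckWeight δ ρ)
          (derivSq 0 fun q => neckCutoff ρ q.1 • v q) := by
        rw [wInt_derivSq_zero_smul]
        gcongr
        exact wInt_mono_weight (contDiff_cutoffWeight δ ρ).continuous (by fun_prop)
          (continuous_derivSq hv 0) (derivSq_nonneg 0 v)
          fun s _ => cutoffWeight_sq_le (hκ₀.le.trans hκ₀δ) ρ s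
    _ ≤ _ := sq_mul_wInt_neckWeight_le (by linarith) (by linarith) hκ₀ hκ₀δ hκ₀π
        ((hχ.comp contDiff_fst).smul hv) (fun p => by simp [hper p])
        (fun t => by simp [(neckCutoff_eventuallyEq_zero_left ρ).eq_of_nhds])
        (fun t => by simp [(neckCutoff_eventuallyEq_zero_right ρ).eq_of_nhds])
        (by simp [intervalIntegral.integral_smul, hmean])

theorem wInt_cutoffWeight_derivSq_zero_le (hκ₀ : 0 < κ₀) (hκ₀δ : κ₀ ≤ δ)
    (hκ₀π : κ₀ ≤ 2 * π - δ) (hK : IsCutoffBound δ K) (hρ : 0 ≤ ρ) (hA : ContDiff ℝ ∞ A)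
    (hAκ : ∀ p : ℝ × ℝ, p.1 ∈ Icc (-ρ - 1) (ρ + 1) → ‖A p - Jstd n‖ ≤ κ)
    (hv : ContDiff ℝ ∞ v) (hper : Function.Periodic v (0, 1))
    (hmean : ∫ t in (0 : ℝ)..1, v (0, t) = 0) :
    wInt (-ρ - 1) (ρ + 1) (cutoffWeight δ ρ) (derivSq 0 v)
      ≤ 3 * K / κ₀ ^ 2 * (wInt (-ρ - 1) (ρ + 1) (neckWeight δ ρ) (derivSq 0 (cauchyRiemann A v))
        + endsInt ρ (derivSq 0 v)
        + κ ^ 2 * wInt (-ρ - 1) (ρ + 1) (cutoffWeight δ ρ) (derivSq 1 v)) := by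
  have hδ : 0 ≤ δ := hκ₀.le.trans hκ₀δ
  have hχ := contDiff_neckCutoff ρ
  have hχc := hχ.continuous
  have hχc' : Continuous (deriv (neckCutoff ρ)) := hχ.continuous_deriv (by simp)
  have hnW := continuous_neckWeight δ ρ
  have hgap := sq_mul_wInt_cutoffWeight_derivSq_zero_le hκ₀ hκ₀δ hκ₀π hρ hv hper hmean
  have hsplit := wInt_derivSq_zero_cauchyRiemann_const_smul_le hχ hnW hA hAκ hv
  have hends : wInt (-ρ - 1) (ρ + 1) (fun s => deriv (neckCutoff ρ) s * neckWeight δ ρ s)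
      (derivSq 0 v) ≤ K * endsInt ρ (derivSq 0 v) := by
    simpa [wInt] using (hK.isControlled_deriv_neckCutoff_mul_neckWeight ρ).wInt_le hρ
      continuous_zero (by fun_prop) (continuous_derivSq hv 0) (derivSq_nonneg 0 v)
  have hCR : wInt (-ρ - 1) (ρ + 1) (fun s => neckCutoff ρ s * neckWeight δ ρ s)
      (derivSq 0 (cauchyRiemann A v))
      ≤ K * wInt (-ρ - 1) (ρ + 1) (neckWeight δ ρ) (derivSq 0 (cauchyRiemann A v)) :=
    (wInt_mono_weight (by fun_prop) hnW (continuous_derivSq (contDiff_cauchyRiemann hA hv) 0)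
      (derivSq_nonneg 0 _) fun s _ => sq_neckCutoff_mul_neckWeight_le_neckWeight_sq δ ρ s).trans
      (le_mul_of_one_le_left (wInt_nonneg (derivSq_nonneg 0 _)) (hK.one_le hδ))
  have hcoeff := mul_le_mul_of_nonneg_left (hK.wInt_neckCutoff_mul_neckWeight_le (ρ := ρ)
    (a := -ρ - 1) (b := ρ + 1) hδ (continuous_derivSq hv 1) (derivSq_nonneg 1 v)) (sq_nonneg κ)
  rw [div_mul_eq_mul_div, le_div_iff₀' (by positivity)]
  linarith

end NeckEstimate

section Sobolev

/-- The integrand of the squared Sobolev `k`-norm, in terms of `derivSq`. -/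
def sobolevSq {E : Type*} [NormedAddCommGroup E] [NormedSpace ℝ E] (k : ℕ) (f : ℝ × ℝ → E)
    (p : ℝ × ℝ) : ℝ :=
  ∑ j ∈ Finset.range (k + 1), derivSq j f p

theorem sobolevSq_nonneg {E : Type*} [NormedAddCommGroup E] [NormedSpace ℝ E] (k : ℕ)
    (f : ℝ × ℝ → E) (p : ℝ × ℝ) : 0 ≤ sobolevSq k f p :=
  Finset.sum_nonneg fun j _ => derivSq_nonneg j f p

theorem derivSq_le_sobolevSq {E : Type*} [NormedAddCommGroup E] [NormedSpace ℝ E] {j k : ℕ}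
    (hjk : j ≤ k) (f : ℝ × ℝ → E) (p : ℝ × ℝ) : derivSq j f p ≤ sobolevSq k f p :=
  Finset.single_le_sum (f := fun j => derivSq j f p) (fun j _ => derivSq_nonneg j f p)
    (Finset.mem_range.2 (Nat.lt_succ_of_le hjk))

theorem continuous_sobolevSq {E : Type*} [NormedAddCommGroup E] [InnerProductSpace ℝ E]
    {f : ℝ × ℝ → E} (hf : ContDiff ℝ ∞ f) (k : ℕ) : Continuous (sobolevSq k f) :=
  continuous_finsetSum _ fun j _ => continuous_derivSq hf j

theorem endsInt_mono {ρ : ℝ} {G H : ℝ × ℝ → ℝ} (hG : Continuous G) (hH : Continuous H)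
    (h : ∀ p, G p ≤ H p) : endsInt ρ G ≤ endsInt ρ H :=
  add_le_add (setIntegral_cyl_mono hG hH fun p _ => h p)
    (setIntegral_cyl_mono hG hH fun p _ => h p)

end Sobolev

section Bootstrap

variable {n : ℕ} {δ ρ κ κ₀ K e L : ℝ} {A : ℝ × ℝ → Cn n →L[ℝ] Cn n} {v : ℝ × ℝ → Cn n}

/-- The weighted `L²`-energy of the `j`-th derivatives of `v` on the neck, cut off at the ends. -/
def neckEnergy (δ ρ : ℝ) (j : ℕ) (v : ℝ × ℝ → Cn n) : ℝ :=
  wInt (-ρ - 1) (ρ + 1) (cutoffWeight δ ρ) (derivSq j v)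

/-- The quantity that controls the energies: the weighted Sobolev 2-energy of the antiholomorphic
derivative together with the unweighted Sobolev 2-energy of `v` on the two ends. -/
def neckSource (δ ρ : ℝ) (A : ℝ × ℝ → Cn n →L[ℝ] Cn n) (v : ℝ × ℝ → Cn n) : ℝ :=
  wInt (-ρ - 1) (ρ + 1) (neckWeight δ ρ) (sobolevSq 2 (cauchyRiemann A v))
    + endsInt ρ (sobolevSq 2 v)

theorem wInt_derivSq_add_endsInt_le_neckSource (hA : ContDiff ℝ ∞ A) (hv : ContDiff ℝ ∞ v) {j : ℕ}
    (hj : j ≤ 2) :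
    wInt (-ρ - 1) (ρ + 1) (neckWeight δ ρ) (derivSq j (cauchyRiemann A v))
      + endsInt ρ (derivSq j v) ≤ neckSource δ ρ A v := by
  have hCR := contDiff_cauchyRiemann hA hv
  exact add_le_add
    (wInt_mono (continuous_neckWeight δ ρ) (continuous_derivSq hCR j) (continuous_sobolevSq hCR 2)
      fun p _ => derivSq_le_sobolevSq hj _ p)
    (endsInt_mono (continuous_derivSq hv j) (continuous_sobolevSq hv 2)
      fun p => derivSq_le_sobolevSq hj v p)

theorem neckEnergy_cauchyRiemann_le_neckSource (hδ : 0 ≤ δ) (hA : ContDiff ℝ ∞ A)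
    (hv : ContDiff ℝ ∞ v) {j : ℕ} (hj : j ≤ 2) :
    neckEnergy δ ρ j (cauchyRiemann A v) ≤ neckSource δ ρ A v :=
  calc neckEnergy δ ρ j (cauchyRiemann A v)
      ≤ wInt (-ρ - 1) (ρ + 1) (neckWeight δ ρ) (derivSq j (cauchyRiemann A v)) :=
        wInt_mono_weight (contDiff_cutoffWeight δ ρ).continuous (continuous_neckWeight δ ρ)
          (continuous_derivSq (contDiff_cauchyRiemann hA hv) j) (derivSq_nonneg j _) fun s _ =>
            (cutoffWeight_sq_le hδ ρ s).trans (sq_neckCutoff_mul_neckWeight_le_neckWeight_sq δ ρ s)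
    _ ≤ neckSource δ ρ A v :=
        (le_add_of_nonneg_right (endsInt_nonneg (derivSq_nonneg j v))).trans
          (wInt_derivSq_add_endsInt_le_neckSource hA hv hj)

theorem IsControlled.wInt_derivSq_le {f : ℝ → ℝ} (hf : IsControlled ρ K (cutoffWeight δ ρ) f)
    (hρ : 0 ≤ ρ) (hfc : Continuous f) (hA : ContDiff ℝ ∞ A) (hv : ContDiff ℝ ∞ v) {j : ℕ}
    (hj : j ≤ 2) :
    wInt (-ρ - 1) (ρ + 1) f (derivSq j v) ≤ K * (neckEnergy δ ρ j v + neckSource δ ρ A v) := by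
  refine (hf.wInt_le hρ (contDiff_cutoffWeight δ ρ).continuous hfc (continuous_derivSq hv j)
    (derivSq_nonneg j v)).trans ?_
  have := hf.nonneg
  unfold neckEnergy
  gcongr
  exact (le_add_of_nonneg_left (wInt_nonneg (derivSq_nonneg j _))).trans
    (wInt_derivSq_add_endsInt_le_neckSource hA hv hj)

theorem isCutoff_cutoffWeight (δ ρ : ℝ) : IsCutoff (-ρ - 1) (ρ + 1) (cutoffWeight δ ρ) := by
  simpa using isCutoff_iteratedDeriv_cutoffWeight δ ρ 0

theorem isCutoff_deriv_cutoffWeight (δ ρ : ℝ) :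
    IsCutoff (-ρ - 1) (ρ + 1) (deriv (cutoffWeight δ ρ)) := by
  simpa using isCutoff_iteratedDeriv_cutoffWeight δ ρ 1

theorem IsSmallSystem.neckEnergy_zero_le
    (hS : IsSmallSystem (-ρ - 1) (ρ + 1) e L κ (Jstd n) A v) (hκ₀ : 0 < κ₀) (hκ₀δ : κ₀ ≤ δ)
    (hκ₀π : κ₀ ≤ 2 * π - δ) (hK : IsCutoffBound δ K) (hρ : 0 ≤ ρ)
    (hmean : ∫ t in (0 : ℝ)..1, v (0, t) = 0) :
    neckEnergy δ ρ 0 v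
      ≤ 3 * K / κ₀ ^ 2 * (neckSource δ ρ A v + κ ^ 2 * neckEnergy δ ρ 1 v) := by
  have := zero_le_one.trans (hK.one_le (hκ₀.le.trans hκ₀δ))
  refine (wInt_cutoffWeight_derivSq_zero_le hκ₀ hκ₀δ hκ₀π hK hρ hS.contDiff_coeff
    hS.norm_coeff_sub_le hS.contDiff_map hS.periodic_map hmean).trans ?_
  gcongr
  · exact wInt_derivSq_add_endsInt_le_neckSource hS.contDiff_coeff hS.contDiff_map (by norm_num)
  · exact le_rfl

theorem IsSmallSystem.neckEnergy_one_le
    (hS : IsSmallSystem (-ρ - 1) (ρ + 1) e L κ (Jstd n) A v) (hδ : 0 ≤ δ)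
    (hK : IsCutoffBound δ K) (hρ : 0 ≤ ρ) :
    neckEnergy δ ρ 1 v ≤ 16 * neckSource δ ρ A v
      + 12 * (K * (neckEnergy δ ρ 0 v + neckSource δ ρ A v)) := by
  have hv := hS.contDiff_map
  refine (hS.wInt_derivSq_one_le (isCutoff_cutoffWeight δ ρ) hv hS.periodic_map).trans ?_
  gcongr
  · exact neckEnergy_cauchyRiemann_le_neckSource hδ hS.contDiff_coeff hv (by norm_num)
  · exact (hK.isControlled_deriv ρ).wInt_derivSq_le hρ
      (isCutoff_cutoffWeight δ ρ).continuous_deriv hS.contDiff_coeff hv (by norm_num)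

theorem IsSmallSystem.neckEnergy_two_le
    (hS : IsSmallSystem (-ρ - 1) (ρ + 1) e L κ (Jstd n) A v) (hδ : 0 ≤ δ)
    (hK : IsCutoffBound δ K) (hρ : 0 ≤ ρ) :
    neckEnergy δ ρ 2 v ≤ 64 * neckSource δ ρ A v
      + 25 * (K * (neckEnergy δ ρ 1 v + neckSource δ ρ A v)) := by
  have hv := hS.contDiff_map
  refine (hS.wInt_derivSq_two_le (isCutoff_cutoffWeight δ ρ)).trans ?_
  gcongr
  · exact neckEnergy_cauchyRiemann_le_neckSource hδ hS.contDiff_coeff hv (by norm_num)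
  · exact (hK.isControlled_deriv ρ).wInt_derivSq_le hρ
      (isCutoff_cutoffWeight δ ρ).continuous_deriv hS.contDiff_coeff hv (by norm_num)

theorem IsSmallSystem.neckEnergy_three_le
    (hS : IsSmallSystem (-ρ - 1) (ρ + 1) e L κ (Jstd n) A v) (hδ : 0 ≤ δ)
    (hK : IsCutoffBound δ K) (hρ : 0 ≤ ρ) :
    neckEnergy δ ρ 3 v ≤ 64 * neckSource δ ρ A v
      + 25 * (K * (neckEnergy δ ρ 2 v + neckSource δ ρ A v))
      + K * (neckEnergy δ ρ 1 v + neckSource δ ρ A v) := by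
  have hv := hS.contDiff_map
  refine (hS.wInt_derivSq_three_le (isCutoff_cutoffWeight δ ρ)
    (isCutoff_deriv_cutoffWeight δ ρ)).trans ?_
  gcongr
  · exact neckEnergy_cauchyRiemann_le_neckSource hδ hS.contDiff_coeff hv le_rfl
  · exact (hK.isControlled_deriv ρ).wInt_derivSq_le hρ
      (isCutoff_cutoffWeight δ ρ).continuous_deriv hS.contDiff_coeff hv le_rfl
  · exact (hK.isControlled_deriv_deriv ρ).wInt_derivSq_le hρ
      (isCutoff_deriv_cutoffWeight δ ρ).continuous_deriv hS.contDiff_coeff hv (by norm_num)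

-- `Xⱼ` stands for `neckEnergy δ ρ j v` and `T` for `neckSource δ ρ A v`; smallness of `η` lets the
-- first-order term of the zeroth-order bound be absorbed.
theorem exists_bootstrap_bound {K Q : ℝ} (hK₁ : 1 ≤ K) (hQ : 0 ≤ Q) :
    ∃ C, 0 ≤ C ∧ ∀ η X₀ X₁ X₂ X₃ T : ℝ, 0 ≤ η → 24 * (K * Q) * η ≤ 1 → 0 ≤ X₁ →
      X₀ ≤ Q * (T + η * X₁) → X₁ ≤ 16 * T + 12 * (K * (X₀ + T)) →
      X₂ ≤ 64 * T + 25 * (K * (X₁ + T)) →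
      X₃ ≤ 64 * T + 25 * (K * (X₂ + T)) + K * (X₁ + T) →
      X₀ + X₁ + X₂ + X₃ ≤ C * T := by
  have hK : 0 ≤ K := zero_le_one.trans hK₁
  set C₁ := 2 * (16 + 12 * (K * (Q + 1)))
  set C₂ := 64 + 25 * (K * (C₁ + 1))
  set C₃ := 64 + 25 * (K * (C₂ + 1)) + K * (C₁ + 1)
  refine ⟨(Q + C₁) + C₁ + C₂ + C₃, by positivity,
    fun η X₀ X₁ X₂ X₃ T hη hKη hX₁ h₀ h₁ h₂ h₃ => ?_⟩
  have h₁T : X₁ ≤ C₁ * T := by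
    have hKX₀ := mul_le_mul_of_nonneg_left h₀ hK
    have habsorb := mul_le_mul_of_nonneg_right hKη hX₁
    linear_combination 2 * h₁ + 24 * hKX₀ + habsorb
  have h₀T : X₀ ≤ (Q + C₁) * T := by
    have hQη : 24 * Q * η ≤ 1 := by
      linarith [mul_le_mul_of_nonneg_right hK₁ (mul_nonneg hQ hη)]
    have habsorb := mul_le_mul_of_nonneg_right hQη hX₁
    linear_combination h₀ + 1 / 24 * habsorb + 1 / 24 * h₁T + 23 / 24 * (hX₁.trans h₁T)
  have h₂T : X₂ ≤ C₂ * T := by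
    linear_combination h₂ + 25 * mul_le_mul_of_nonneg_left h₁T hK
  have h₃T : X₃ ≤ C₃ * T := by
    linear_combination h₃ + 25 * mul_le_mul_of_nonneg_left h₂T hK
      + mul_le_mul_of_nonneg_left h₁T hK
  linear_combination h₀T + h₁T + h₂T + h₃T

theorem exists_wInt_sobolevSq_three_le {δ : ℝ} (hδ₀ : 0 < δ) (hδ₂ : δ < 2 * π) (n : ℕ) :
    ∃ η > 0, ∃ C, 0 ≤ C ∧ ∀ (ρ e L κ : ℝ) (A : ℝ × ℝ → Cn n →L[ℝ] Cn n) (v : ℝ × ℝ → Cn n),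
      0 ≤ ρ → κ ^ 2 ≤ η → IsSmallSystem (-ρ - 1) (ρ + 1) e L κ (Jstd n) A v →
      ∫ t in (0 : ℝ)..1, v (0, t) = 0 →
      wInt (-ρ - 1) (ρ + 1) (cutoffWeight δ ρ) (sobolevSq 3 v) ≤ C * neckSource δ ρ A v := by
  obtain ⟨K, hK⟩ := exists_isCutoffBound hδ₀.le
  have hK₁ := hK.one_le hδ₀.le
  set κ₀ := min δ (2 * π - δ)
  have hκ₀ : 0 < κ₀ := lt_min hδ₀ (by linarith)
  set Q := 3 * K / κ₀ ^ 2
  have hQ : 0 < Q := by positivity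
  obtain ⟨C, hC, hboot⟩ := exists_bootstrap_bound hK₁ hQ.le
  refine ⟨1 / (24 * (K * Q)), by positivity, C, hC, fun ρ e L κ A v hρ hκ hS hmean => ?_⟩
  have hsum : wInt (-ρ - 1) (ρ + 1) (cutoffWeight δ ρ) (sobolevSq 3 v)
      = ∑ j ∈ Finset.range 4, neckEnergy δ ρ j v :=
    wInt_sum _ (contDiff_cutoffWeight δ ρ).continuous fun j => continuous_derivSq hS.contDiff_map j
  have hbound := hboot (κ ^ 2) _ _ _ _ _ (sq_nonneg κ)
    (by rwa [le_div_iff₀' (by positivity)] at hκ)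
    (show 0 ≤ neckEnergy δ ρ 1 v from wInt_nonneg (derivSq_nonneg 1 v))
    (hS.neckEnergy_zero_le hκ₀ (min_le_left _ _) (min_le_right _ _) hK hρ hmean)
    (hS.neckEnergy_one_le hδ₀.le hK hρ) (hS.neckEnergy_two_le hδ₀.le hK hρ)
    (hS.neckEnergy_three_le hδ₀.le hK hρ)
  simpa [hsum, Finset.sum_range_succ] using hbound

end Bootstrap

/-! ### Comparison with the Sobolev norms -/

section IteratedFDeriv

variable {E : Type*} [NormedAddCommGroup E] [NormedSpace ℝ E] {f : ℝ × ℝ → E}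

theorem norm_iteratedFDeriv_pd_le (hf : ContDiff ℝ ∞ f) (j : ℕ) (i : Fin 2) (p : ℝ × ℝ) :
    ‖iteratedFDeriv ℝ j (pd i f) p‖ ≤ ‖iteratedFDeriv ℝ (j + 1) f p‖ := by
  have hf' : ContDiff ℝ ∞ (fderiv ℝ f) := hf.fderiv_right (by simp)
  have happly := norm_iteratedFDeriv_clm_apply_const (c := axis i) (hf'.contDiffAt (x := p))
    (show (j : WithTop ℕ∞) ≤ ∞ by exact_mod_cast le_top)
  rwa [norm_axis, one_mul, norm_iteratedFDeriv_fderiv] at happly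

theorem norm_iteratedFDeriv_smulRight_le {G : Type*} [NormedAddCommGroup G] [NormedSpace ℝ G]
    {l : G →L[ℝ] ℝ} (hl : ‖l‖ ≤ 1) (hf : ContDiff ℝ ∞ f) (j : ℕ) (p : ℝ × ℝ) :
    ‖iteratedFDeriv ℝ j (fun q => l.smulRight (f q)) p‖ ≤ ‖iteratedFDeriv ℝ j f p‖ := by
  have hnorm : ‖ContinuousLinearMap.smulRightL ℝ G E l‖ ≤ 1 :=
    ContinuousLinearMap.opNorm_le_bound _ zero_le_one fun x => by
      rw [ContinuousLinearMap.smulRightL_apply_apply, ContinuousLinearMap.norm_smulRight_apply]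
      gcongr
  exact ((ContinuousLinearMap.smulRightL ℝ G E l).norm_iteratedFDeriv_comp_left
    (hf.contDiffAt (x := p)) (show (j : WithTop ℕ∞) ≤ ∞ by exact_mod_cast le_top)).trans
    (mul_le_of_le_one_left (norm_nonneg _) hnorm)

theorem norm_iteratedFDeriv_succ_le (hf : ContDiff ℝ ∞ f) (j : ℕ) (p : ℝ × ℝ) :
    ‖iteratedFDeriv ℝ (j + 1) f p‖
      ≤ ‖iteratedFDeriv ℝ j (pd 0 f) p‖ + ‖iteratedFDeriv ℝ j (pd 1 f) p‖ := by
  have hsplit : fderiv ℝ f = (fun q => (ContinuousLinearMap.fst ℝ ℝ ℝ).smulRight (pd 0 f q))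
      + fun q => (ContinuousLinearMap.snd ℝ ℝ ℝ).smulRight (pd 1 f q) := by
    funext q
    ext <;> simp [pd, axis]
  have hj : (j : WithTop ℕ∞) ≤ ∞ := by exact_mod_cast le_top
  have hsmooth (l : ℝ × ℝ →L[ℝ] ℝ) (i : Fin 2) :
      ContDiffAt ℝ j (fun q => l.smulRight (pd i f q)) p :=
    (((ContinuousLinearMap.smulRightL ℝ (ℝ × ℝ) E l).contDiff.comp (contDiff_pd hf i)).of_le
      hj).contDiffAt
  rw [← norm_iteratedFDeriv_fderiv, hsplit, iteratedFDeriv_add_apply (hsmooth _ 0) (hsmooth _ 1)]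
  refine (norm_add_le _ _).trans (add_le_add ?_ ?_)
  · exact norm_iteratedFDeriv_smulRight_le (ContinuousLinearMap.norm_fst_le ℝ ℝ ℝ)
      (contDiff_pd hf 0) j p
  · exact norm_iteratedFDeriv_smulRight_le (ContinuousLinearMap.norm_snd_le ℝ ℝ ℝ)
      (contDiff_pd hf 1) j p

theorem derivSq_le_norm_iteratedFDeriv_sq (hf : ContDiff ℝ ∞ f) (j : ℕ) (p : ℝ × ℝ) :
    derivSq j f p ≤ 2 ^ j * ‖iteratedFDeriv ℝ j f p‖ ^ 2 := by
  induction j generalizing f with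
  | zero => simp [derivSq]
  | succ j ih =>
    calc derivSq (j + 1) f p ≤ ∑ i : Fin 2, 2 ^ j * ‖iteratedFDeriv ℝ (j + 1) f p‖ ^ 2 :=
          Finset.sum_le_sum fun i _ => (ih (contDiff_pd hf i)).trans
            (by gcongr; exact norm_iteratedFDeriv_pd_le hf j i p)
      _ = 2 ^ (j + 1) * ‖iteratedFDeriv ℝ (j + 1) f p‖ ^ 2 := by
          rw [Fin.sum_const, nsmul_eq_mul, pow_succ']
          push_cast
          ring

theorem norm_iteratedFDeriv_sq_le_derivSq (hf : ContDiff ℝ ∞ f) (j : ℕ) (p : ℝ × ℝ) :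
    ‖iteratedFDeriv ℝ j f p‖ ^ 2 ≤ 2 ^ j * derivSq j f p := by
  induction j generalizing f with
  | zero => simp [derivSq]
  | succ j ih =>
    calc ‖iteratedFDeriv ℝ (j + 1) f p‖ ^ 2
        ≤ (‖iteratedFDeriv ℝ j (pd 0 f) p‖ + ‖iteratedFDeriv ℝ j (pd 1 f) p‖) ^ 2 := by
          gcongr
          exact norm_iteratedFDeriv_succ_le hf j p
      _ ≤ 2 * (‖iteratedFDeriv ℝ j (pd 0 f) p‖ ^ 2 + ‖iteratedFDeriv ℝ j (pd 1 f) p‖ ^ 2) :=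
          add_sq_le
      _ ≤ 2 * (2 ^ j * derivSq j (pd 0 f) p + 2 ^ j * derivSq j (pd 1 f) p) := by
          gcongr <;> exact ih (contDiff_pd hf _)
      _ = 2 ^ (j + 1) * derivSq (j + 1) f p := by
          rw [derivSq, Fin.sum_univ_two]
          ring

theorem derivSq_const_smul (j : ℕ) (c : ℝ) (f : ℝ × ℝ → E) (p : ℝ × ℝ) :
    derivSq j (c • f) p = c ^ 2 * derivSq j f p := by
  induction j generalizing f with
  | zero => exact norm_real_smul_sq c (f p)
  | succ j ih =>
    have hpd (i : Fin 2) : pd i (c • f) = c • pd i f := by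
      funext q
      simp [pd, fderiv_const_smul_field]
    simp only [derivSq, hpd, ih, Finset.mul_sum]

end IteratedFDeriv

section HatNorm

variable {E : Type*} [NormedAddCommGroup E]

theorem sobNorm_eq_hatNorm_zero [NormedSpace ℝ E] (k : ℕ) (r : ℝ) (f : ℝ × ℝ → E)
    (U : Set (ℝ × ℝ)) : sobNorm k f U = hatNorm k 0 r f U := by
  simp [sobNorm, hatNorm]

theorem hatNorm_sq [NormedSpace ℝ E] (k : ℕ) (δ ρ : ℝ) (f : ℝ × ℝ → E) (a b : ℝ) :
    hatNorm k δ ρ f (cyl a b) ^ 2 = wInt a b (neckWeight δ ρ)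
      fun p => ∑ j ∈ Finset.range (k + 1), ‖iteratedFDeriv ℝ j f p‖ ^ 2 := by
  rw [hatNorm, Real.sq_sqrt (integral_nonneg fun p => by positivity), wInt]
  simp only [neckWeight_sq, mul_comm]

variable [InnerProductSpace ℝ E] {f : ℝ × ℝ → E}

theorem continuous_sum_norm_iteratedFDeriv_sq (hf : ContDiff ℝ ∞ f) (k : ℕ) :
    Continuous fun p => ∑ j ∈ Finset.range (k + 1), ‖iteratedFDeriv ℝ j f p‖ ^ 2 :=
  continuous_finsetSum _ fun j _ =>
    (hf.continuous_iteratedFDeriv (by exact_mod_cast le_top)).norm.pow 2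

theorem wInt_sobolevSq_le_hatNorm_sq (hf : ContDiff ℝ ∞ f) (k : ℕ) (δ ρ a b : ℝ) :
    wInt a b (neckWeight δ ρ) (sobolevSq k f) ≤ 2 ^ k * hatNorm k δ ρ f (cyl a b) ^ 2 := by
  have hc := continuous_sum_norm_iteratedFDeriv_sq hf k
  rw [hatNorm_sq, ← wInt_const_mul]
  refine wInt_mono (continuous_neckWeight δ ρ) (continuous_sobolevSq hf k) (by fun_prop)
    fun p _ => ?_
  rw [Finset.mul_sum]
  refine Finset.sum_le_sum fun j hj => (derivSq_le_norm_iteratedFDeriv_sq hf j p).trans ?_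
  gcongr
  · exact one_le_two
  · exact Nat.le_of_lt_succ (Finset.mem_range.1 hj)

theorem hatNorm_sq_le_wInt_sobolevSq (hf : ContDiff ℝ ∞ f) (k : ℕ) (δ ρ a b : ℝ) :
    hatNorm k δ ρ f (cyl a b) ^ 2 ≤ 2 ^ k * wInt a b (neckWeight δ ρ) (sobolevSq k f) := by
  have hc := continuous_sobolevSq hf k
  rw [hatNorm_sq, ← wInt_const_mul]
  refine wInt_mono (continuous_neckWeight δ ρ) (continuous_sum_norm_iteratedFDeriv_sq hf k)
    (by fun_prop) fun p _ => ?_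
  rw [sobolevSq, Finset.mul_sum]
  refine Finset.sum_le_sum fun j hj => (norm_iteratedFDeriv_sq_le_derivSq hf j p).trans ?_
  have := derivSq_nonneg j f p
  gcongr
  · exact one_le_two
  · exact Nat.le_of_lt_succ (Finset.mem_range.1 hj)

theorem endsInt_sobolevSq_le (hf : ContDiff ℝ ∞ f) (k : ℕ) (ρ : ℝ) :
    endsInt ρ (sobolevSq k f) ≤ 2 ^ k *
      (sobNorm k f (cyl (-ρ - 1) (-ρ)) ^ 2 + sobNorm k f (cyl ρ (ρ + 1)) ^ 2) := by
  have hpiece (a b : ℝ) : ∫ p in cyl a b, sobolevSq k f p ≤ 2 ^ k * sobNorm k f (cyl a b) ^ 2 := by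
    simpa [sobNorm_eq_hatNorm_zero k 0, wInt, neckWeight] using
      wInt_sobolevSq_le_hatNorm_sq hf k 0 0 a b
  rw [mul_add]
  exact add_le_add (hpiece _ _) (hpiece _ _)

theorem wInt_neckWeight_le_exp_mul_cutoffWeight {δ ρ : ℝ} (hδ : 0 ≤ δ) (hρ : 0 ≤ ρ)
    {G : ℝ × ℝ → ℝ} (hG : Continuous G) (hG₀ : ∀ p, 0 ≤ G p) :
    wInt (-ρ) ρ (neckWeight δ ρ) G
      ≤ exp δ ^ 2 * wInt (-ρ - 1) (ρ + 1) (cutoffWeight δ ρ) G := by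
  have hw := (contDiff_cutoffWeight δ ρ).continuous
  rw [← wInt_const_mul_weight]
  calc wInt (-ρ) ρ (neckWeight δ ρ) G
      ≤ wInt (-ρ) ρ (fun s => exp δ * cutoffWeight δ ρ s) G :=
        wInt_mono_weight (continuous_neckWeight δ ρ) (by fun_prop) hG hG₀ fun s hs => by
          simpa [(neckCutoff_eventuallyEq_one (abs_le.2 hs)).eq_of_nhds] using
            sq_neckCutoff_mul_neckWeight_le hδ ρ s
    _ ≤ wInt (-ρ - 1) (ρ + 1) (fun s => exp δ * cutoffWeight δ ρ s) G := by
        rw [wInt, wInt, setIntegral_cyl_eq_add_endsInt hρ (by fun_prop)]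
        exact le_add_of_nonneg_right (endsInt_nonneg fun p => mul_nonneg (sq_nonneg _) (hG₀ p))

end HatNorm

/-! ### Almost complex structures near the origin -/

theorem isSkewIsometry_Jstd (n : ℕ) : IsSkewIsometry (Jstd n) := by
  have happly (x : Cn n) : Jstd n x = Complex.I • x := by simp [Jstd]
  refine ⟨fun x => by rw [happly, norm_smul, Complex.norm_I, one_mul], fun x y => ?_⟩
  rw [happly, happly, PiLp.inner_apply, PiLp.inner_apply, ← Finset.sum_neg_distrib]
  refine Finset.sum_congr rfl fun i _ => ?_
  simp only [PiLp.smul_apply, smul_eq_mul, Complex.inner, Complex.mul_re, Complex.mul_im,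
    Complex.conj_re, Complex.conj_im, Complex.I_re, Complex.I_im]
  ring

section UnitBallBounds

variable {E F : Type*} [NormedAddCommGroup E] [NormedSpace ℝ E]
  [NormedAddCommGroup F] [NormedSpace ℝ F]

/-- `L` bounds the first and second derivatives of `f` on the closed unit ball. -/
structure IsUnitBallDerivBound (L : ℝ) (f : E → F) : Prop where
  nonneg : 0 ≤ L
  norm_fderiv_le : ∀ x, ‖x‖ ≤ 1 → ‖fderiv ℝ f x‖ ≤ L
  norm_fderiv_fderiv_le : ∀ x, ‖x‖ ≤ 1 → ‖fderiv ℝ (fderiv ℝ f) x‖ ≤ L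

variable {L : ℝ} {f : E → F} {u : ℝ × ℝ → E} {p : ℝ × ℝ}

theorem exists_norm_fderiv_le_of_norm_le_one [ProperSpace E] (hf : ContDiff ℝ ∞ f) :
    ∃ B, ∀ x, ‖x‖ ≤ 1 → ‖fderiv ℝ f x‖ ≤ B := by
  have hcont : Continuous (fderiv ℝ f) := hf.continuous_fderiv (by simp)
  simpa using (isCompact_closedBall (0 : E) 1).exists_bound_of_continuousOn hcont.continuousOn

theorem exists_isUnitBallDerivBound [ProperSpace E] (hf : ContDiff ℝ ∞ f) :
    ∃ L, IsUnitBallDerivBound L f := by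
  obtain ⟨B₁, hB₁⟩ := exists_norm_fderiv_le_of_norm_le_one hf
  obtain ⟨B₂, hB₂⟩ := exists_norm_fderiv_le_of_norm_le_one (f := fderiv ℝ f)
    (hf.fderiv_right (by simp))
  have hB₁₀ : 0 ≤ B₁ := (norm_nonneg _).trans (hB₁ 0 (by simp))
  exact ⟨max B₁ B₂, le_max_of_le_left hB₁₀, fun x hx => (hB₁ x hx).trans (le_max_left _ _),
    fun x hx => (hB₂ x hx).trans (le_max_right _ _)⟩

namespace IsUnitBallDerivBound

theorem norm_sub_zero_le (hL : IsUnitBallDerivBound L f) (hf : Differentiable ℝ f) {x : E}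
    (hx : ‖x‖ ≤ 1) : ‖f x - f 0‖ ≤ L * ‖x‖ := by
  simpa using (convex_closedBall (0 : E) 1).norm_image_sub_le_of_norm_fderiv_le (𝕜 := ℝ)
    (fun y _ => hf y) (fun y hy => hL.norm_fderiv_le y (by simpa using hy))
    (Metric.mem_closedBall_self zero_le_one) (by simpa using hx)

theorem norm_pd_comp_le (hL : IsUnitBallDerivBound L f) (hf : ContDiff ℝ ∞ f)
    (hu : ContDiff ℝ ∞ u) (hp : ‖u p‖ ≤ 1) (i : Fin 2) :
    ‖pd i (fun q => f (u q)) p‖ ≤ L * √(derivSq 1 u p) := by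
  rw [pd_comp hf hu]
  exact (fderiv ℝ f (u p)).le_of_opNorm_le_of_le (hL.norm_fderiv_le _ hp) (norm_pd_le_sqrt u i p)

theorem norm_pd_pd_comp_le (hL : IsUnitBallDerivBound L f) (hf : ContDiff ℝ ∞ f)
    (hu : ContDiff ℝ ∞ u) (hp : ‖u p‖ ≤ 1) (i j : Fin 2) :
    ‖pd i (pd j fun q => f (u q)) p‖ ≤ L * (derivSq 1 u p + √(derivSq 2 u p)) := by
  have hf' : ContDiff ℝ ∞ (fderiv ℝ f) := hf.fderiv_right (by simp)
  rw [show pd j (fun q => f (u q)) = fun q => fderiv ℝ f (u q) (pd j u q) from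
      funext (pd_comp hf hu j),
    pd_clm_apply (A := fun q => fderiv ℝ f (u q)) (hf'.comp hu) (contDiff_pd hu j), pd_comp hf' hu]
  have hfirst := (fderiv ℝ f (u p)).le_of_opNorm_le_of_le (hL.norm_fderiv_le _ hp)
    (norm_pd_pd_le_sqrt u i j p)
  have hsecond := (fderiv ℝ (fderiv ℝ f) (u p) (pd i u p)).le_of_opNorm_le_of_le
    ((fderiv ℝ (fderiv ℝ f) (u p)).le_of_opNorm_le_of_le (hL.norm_fderiv_fderiv_le _ hp)
      (norm_pd_le_sqrt u i p)) (norm_pd_le_sqrt u j p)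
  rw [mul_assoc, Real.mul_self_sqrt (derivSq_nonneg 1 u p)] at hsecond
  refine (norm_add_le _ _).trans ?_
  linarith

end IsUnitBallDerivBound

end UnitBallBounds

theorem IsUnitBallDerivBound.isSmallSystem {E : Type*} [NormedAddCommGroup E]
    [InnerProductSpace ℝ E] {J : E → E →L[ℝ] E} {L ε ρ : ℝ} (hL : IsUnitBallDerivBound L J)
    (hJ : ContDiff ℝ ∞ J) (hJ₀ : IsSkewIsometry (J 0)) (hρ : 0 ≤ ρ) (hε₀ : 0 < ε)
    (hε : 2 * ε ≤ 1) (hLε : 400000 * (L * ε) ≤ 1) {u : ℝ × ℝ → E} (hu : ContDiff ℝ ∞ u)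
    (hper : Function.Periodic u (0, 1)) (huε : ∀ p : ℝ × ℝ, |p.1| ≤ ρ + 1 → ‖u p‖ ≤ ε)
    {c : E} (hc : ‖c‖ ≤ ε) :
    IsSmallSystem (-ρ - 1) (ρ + 1) (2 * ε) L (L * ε) (J 0) (fun p => J (u p))
      (fun p => u p - c) := by
  have hu_le (p : ℝ × ℝ) (hp : p.1 ∈ Icc (-ρ - 1) (ρ + 1)) : ‖u p‖ ≤ ε :=
    huε p (abs_le.2 ⟨by linarith [hp.1], hp.2⟩)
  have hu_one (p : ℝ × ℝ) (hp : p.1 ∈ Icc (-ρ - 1) (ρ + 1)) : ‖u p‖ ≤ 1 := by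
    linarith [hu_le p hp]
  have hLε₀ : 0 ≤ L * ε := mul_nonneg hL.nonneg hε₀.le
  exact {
    le := by linarith
    isSkewIsometry := hJ₀
    contDiff_map := hu.sub contDiff_const
    periodic_map := fun p => by simp only [hper p]
    contDiff_coeff := hJ.comp hu
    norm_map_le := fun p hp => (norm_sub_le _ _).trans (by linarith [hu_le p hp])
    norm_coeff_sub_le := fun p hp =>
      (hL.norm_sub_zero_le (hJ.differentiable (by simp)) (hu_one p hp)).trans
        (mul_le_mul_of_nonneg_left (hu_le p hp) hL.nonneg)
    norm_pd_coeff_le := fun i p hp => by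
      rw [derivSq_succ_sub_const]
      exact hL.norm_pd_comp_le hJ hu (hu_one p hp) i
    norm_pd_pd_coeff_le := fun i j p hp => by
      rw [derivSq_succ_sub_const, derivSq_succ_sub_const]
      exact hL.norm_pd_pd_comp_le hJ hu (hu_one p hp) i j
    lipschitz_nonneg := hL.nonneg
    bound_pos := by linarith
    bound_le_one := hε
    four_mul_le_one := by linarith [hLε₀]
    mul_bound_le_one := by linarith }

/-! ### The neck estimate -/

theorem dbarJ_eq_smul_cauchyRiemann {n : ℕ} (J : Cn n → Cn n →L[ℝ] Cn n) (u : ℝ × ℝ → Cn n) :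
    dbarJ J u = (2⁻¹ : ℝ) • cauchyRiemann (fun p => J (u p)) u := by
  funext p
  simp [dbarJ, cauchyRiemann, pdS, pdT, pd, axis]

theorem sobolevSq_cauchyRiemann_eq {n : ℕ} (J : Cn n → Cn n →L[ℝ] Cn n) (u : ℝ × ℝ → Cn n)
    (c : Cn n) (k : ℕ) :
    sobolevSq k (cauchyRiemann (fun p => J (u p)) fun p => u p - c)
      = fun p => 4 * sobolevSq k (dbarJ J u) p := by
  have hsub : cauchyRiemann (fun p => J (u p)) (fun p => u p - c)
      = cauchyRiemann (fun p => J (u p)) u := by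
    funext p
    simp only [cauchyRiemann, pd_sub_const]
  funext p
  simp only [hsub, sobolevSq, dbarJ_eq_smul_cauchyRiemann, derivSq_const_smul, ← Finset.mul_sum]
  ring

theorem neckSource_le {n : ℕ} {J : Cn n → Cn n →L[ℝ] Cn n} {u : ℝ × ℝ → Cn n}
    (hJ : ContDiff ℝ ∞ J) (hu : ContDiff ℝ ∞ u) (c : Cn n) (δ ρ : ℝ) :
    neckSource δ ρ (fun p => J (u p)) (fun p => u p - c)
      ≤ 16 * (hatNorm 2 δ ρ (dbarJ J u) (cyl (-ρ - 1) (ρ + 1))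
        + sobNorm 2 (fun p => u p - c) (cyl (-ρ - 1) (-ρ))
        + sobNorm 2 (fun p => u p - c) (cyl ρ (ρ + 1))) ^ 2 := by
  have hdbar : ContDiff ℝ ∞ (dbarJ J u) := by
    rw [dbarJ_eq_smul_cauchyRiemann]
    exact (contDiff_cauchyRiemann (hJ.comp hu) hu).const_smul (2⁻¹ : ℝ)
  have hsource := wInt_sobolevSq_le_hatNorm_sq hdbar 2 δ ρ (-ρ - 1) (ρ + 1)
  have hends := endsInt_sobolevSq_le (hu.sub (contDiff_const (c := c))) 2 ρ
  rw [neckSource, sobolevSq_cauchyRiemann_eq, wInt_const_mul]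
  have hx : 0 ≤ hatNorm 2 δ ρ (dbarJ J u) (cyl (-ρ - 1) (ρ + 1)) := Real.sqrt_nonneg _
  have hy : 0 ≤ sobNorm 2 (fun p => u p - c) (cyl (-ρ - 1) (-ρ)) := Real.sqrt_nonneg _
  have hz : 0 ≤ sobNorm 2 (fun p => u p - c) (cyl ρ (ρ + 1)) := Real.sqrt_nonneg _
  nlinarith [mul_nonneg hx hy, mul_nonneg hx hz, mul_nonneg hy hz]

theorem exists_hatNorm_three_le {n : ℕ} {δ : ℝ} (hδ₀ : 0 < δ) (hδ₂ : δ < 2 * π) :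
    ∃ η > 0, ∃ C > 0, ∀ (ρ e L κ : ℝ) (J : Cn n → Cn n →L[ℝ] Cn n) (u : ℝ × ℝ → Cn n) (c : Cn n),
      0 ≤ ρ → ContDiff ℝ ∞ J → ContDiff ℝ ∞ u → κ ^ 2 ≤ η →
      IsSmallSystem (-ρ - 1) (ρ + 1) e L κ (Jstd n) (fun p => J (u p)) (fun p => u p - c) →
      ∫ t in (0 : ℝ)..1, (u (0, t) - c) = 0 →
      hatNorm 3 δ ρ (fun p => u p - c) (cyl (-ρ) ρ)
        ≤ C * (hatNorm 2 δ ρ (dbarJ J u) (cyl (-ρ - 1) (ρ + 1))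
          + sobNorm 2 (fun p => u p - c) (cyl (-ρ - 1) (-ρ))
          + sobNorm 2 (fun p => u p - c) (cyl ρ (ρ + 1))) := by
  obtain ⟨η, hη, C, hC, hmain⟩ := exists_wInt_sobolevSq_three_le hδ₀ hδ₂ n
  refine ⟨η, hη, 1 + 128 * exp δ ^ 2 * C, by positivity,
    fun ρ e L κ J u c hρ hJ hu hκ hS hmean => ?_⟩
  have hv : ContDiff ℝ ∞ fun p => u p - c := hu.sub contDiff_const
  set R := hatNorm 2 δ ρ (dbarJ J u) (cyl (-ρ - 1) (ρ + 1))
    + sobNorm 2 (fun p => u p - c) (cyl (-ρ - 1) (-ρ))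
    + sobNorm 2 (fun p => u p - c) (cyl ρ (ρ + 1)) with hR
  have hR₀ : 0 ≤ R := by
    simp only [hR, hatNorm, sobNorm]
    positivity
  set M := 128 * exp δ ^ 2 * C
  have hM₀ : 0 ≤ M := by positivity
  have hsq : hatNorm 3 δ ρ (fun p => u p - c) (cyl (-ρ) ρ) ^ 2 ≤ M * R ^ 2 := calc
    _ ≤ 2 ^ 3 * wInt (-ρ) ρ (neckWeight δ ρ) (sobolevSq 3 fun p => u p - c) :=
        hatNorm_sq_le_wInt_sobolevSq hv 3 δ ρ (-ρ) ρ
    _ ≤ 2 ^ 3 * (exp δ ^ 2 * wInt (-ρ - 1) (ρ + 1) (cutoffWeight δ ρ)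
          (sobolevSq 3 fun p => u p - c)) := by
        gcongr
        exact wInt_neckWeight_le_exp_mul_cutoffWeight hδ₀.le hρ (continuous_sobolevSq hv 3)
          (sobolevSq_nonneg 3 _)
    _ ≤ 2 ^ 3 * (exp δ ^ 2 * (C * (16 * R ^ 2))) := by
        gcongr
        exact (hmain ρ e L κ _ _ hρ hκ hS hmean).trans
          (mul_le_mul_of_nonneg_left (neckSource_le hJ hu c δ ρ) hC)
    _ = M * R ^ 2 := by ring
  refine le_of_sq_le_sq (hsq.trans ?_) (by positivity)
  rw [mul_pow]
  gcongr
  nlinarith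

theorem exists_small_radius (L : ℝ) {η : ℝ} (hη : 0 < η) :
    ∃ ε > 0, 2 * ε ≤ 1 ∧ 400000 * (L * ε) ≤ 1 ∧ (L * ε) ^ 2 ≤ η := by
  have hsmall {g : ℝ → ℝ} (hg : Continuous g) (hg₀ : g 0 = 0) {η : ℝ} (hη : 0 < η) :
      ∀ᶠ ε in 𝓝[>] 0, g ε ≤ η :=
    ((hg.tendsto' 0 0 hg₀).eventually_le_const hη).filter_mono nhdsWithin_le_nhds
  have hall : ∀ᶠ ε in 𝓝[>] 0, 2 * ε ≤ 1 ∧ 400000 * (L * ε) ≤ 1 ∧ (L * ε) ^ 2 ≤ η :=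
    (hsmall (by fun_prop) (by simp) one_pos).and
      ((hsmall (by fun_prop) (by simp) one_pos).and (hsmall (by fun_prop) (by simp) hη))
  obtain ⟨ε, hε, hε₀⟩ := (hall.and self_mem_nhdsWithin).exists
  exact ⟨ε, hε₀, hε⟩

theorem intervalIntegral_sub_average_eq_zero {E : Type*} [NormedAddCommGroup E] [NormedSpace ℝ E]
    [CompleteSpace E] {f : ℝ → E} (hf : Continuous f) :
    ∫ t in (0 : ℝ)..1, (f t - ∫ t in (0 : ℝ)..1, f t) = 0 := by
  rw [intervalIntegral.integral_sub (hf.intervalIntegrable _ _) intervalIntegrable_const]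
  simp

theorem stmt_16_general (n : ℕ) (δ : ℝ) (hδ0 : 0 < δ) (hδ2 : δ < 2 * π)
    (J : Cn n → (Cn n →L[ℝ] Cn n)) (hJs : ContDiff ℝ (⊤ : ℕ∞) J) (hJ0 : J 0 = Jstd n) :
    ∃ ε > 0, ∃ C > 0, ∀ ρ : ℝ, 0 ≤ ρ →
      ∀ u : ℝ × ℝ → Cn n, ContDiff ℝ (⊤ : ℕ∞) u → (∀ s t : ℝ, u (s, t + 1) = u (s, t)) →
      (∀ p : ℝ × ℝ, |p.1| ≤ ρ + 1 → ‖u p‖ ≤ ε) →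
      ∃ c : Cn n, ‖c‖ ≤ ε ∧
        hatNorm 3 δ ρ (fun p => u p - c) (Icc (-ρ) ρ ×ˢ Icc (0:ℝ) 1) ≤
          C * (hatNorm 2 δ ρ (dbarJ J u) (Icc (-ρ - 1) (ρ + 1) ×ˢ Icc (0:ℝ) 1)
            + sobNorm 2 (fun p => u p - c) (Icc (-ρ - 1) (-ρ) ×ˢ Icc (0:ℝ) 1)
            + sobNorm 2 (fun p => u p - c) (Icc ρ (ρ + 1) ×ˢ Icc (0:ℝ) 1)) := by
  obtain ⟨L, hL⟩ := exists_isUnitBallDerivBound hJs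
  obtain ⟨η, hη, C, hC, hmain⟩ := exists_hatNorm_three_le (n := n) hδ0 hδ2
  obtain ⟨ε, hε₀, hε, hLε, hLη⟩ := exists_small_radius L hη
  refine ⟨ε, hε₀, C, hC, fun ρ hρ u hu hper huε => ?_⟩
  have hc : ‖∫ t in (0 : ℝ)..1, u (0, t)‖ ≤ ε := by
    simpa using intervalIntegral.norm_integral_le_of_norm_le_const (a := (0 : ℝ)) (b := 1)
      fun t _ => huε (0, t) (by simpa using by linarith)
  have hmean := intervalIntegral_sub_average_eq_zero (hu.continuous.comp (.prodMk_right 0))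
  have hS := hL.isSmallSystem hJs (hJ0 ▸ isSkewIsometry_Jstd n) hρ hε₀ hε hLε hu
    (fun p => by simpa [Prod.add_def] using hper p.1 p.2) huε hc
  exact ⟨_, hc, hmain ρ _ _ _ J u _ hρ hJs hu hLη (hJ0 ▸ hS) hmean⟩

theorem stmt_16 (n : ℕ) (hn : 1 ≤ n) (δ : ℝ) (hδ0 : 0 < δ) (hδ2 : δ < 2 * π)
    (J : Cn n → (Cn n →L[ℝ] Cn n)) (hJs : ContDiff ℝ (⊤ : ℕ∞) J) (hJ0 : J 0 = Jstd n)
    (hJsq : ∀ x, J x * J x = -1) :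
    ∃ ε > 0, ∃ C > 0, ∀ ρ : ℝ, 0 < ρ →
      ∀ u : ℝ × ℝ → Cn n, ContDiff ℝ (⊤ : ℕ∞) u → (∀ s t : ℝ, u (s, t + 1) = u (s, t)) →
      (∀ p : ℝ × ℝ, |p.1| ≤ ρ + 1 → ‖u p‖ < ε) →
      hatNorm 1 δ ρ (dbarJ J u) (Icc (-ρ - 1) (ρ + 1) ×ˢ Icc (0:ℝ) 1) < ε →
      ∃ c : Cn n, ‖c‖ ≤ ε ∧
        hatNorm 3 δ ρ (fun p => u p - c) (Icc (-ρ) ρ ×ˢ Icc (0:ℝ) 1) ≤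
          C * (hatNorm 2 δ ρ (dbarJ J u) (Icc (-ρ - 1) (ρ + 1) ×ˢ Icc (0:ℝ) 1)
            + sobNorm 2 (fun p => u p - c) (Icc (-ρ - 1) (-ρ) ×ˢ Icc (0:ℝ) 1)
            + sobNorm 2 (fun p => u p - c) (Icc ρ (ρ + 1) ×ˢ Icc (0:ℝ) 1)) := by
  obtain ⟨ε, hε, C, hC, h⟩ := stmt_16_general n δ hδ0 hδ2 J hJs hJ0
  exact ⟨ε, hε, C, hC, fun ρ hρ u hu hper huε _ => h ρ hρ.le u hu hper fun p hp => (huε p hp).le⟩
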